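/- arXiv:math/0101171 — 2 statements merged into one kernel-verified Lean document; each statement's English description precedes it below -/
import Mathlib

section
/- Let g ∈ H^∞, 0 < p < ∞, and let J be an inner function such that J·H^p is contained in the H^p-closure of ℂ[B,g]. Then for every a ∈ 𝔻 with Γ(g)(a) = 0 one has J(a) = 0. -/
/-!
Suppose `J w₀ ≠ 0`; it is shown that `Γ(g)(w₀) ≠ 0`.

Point evaluations and derivatives at points of the disk are continuous for convergence in `H^p`
(also for `p < 1`): Jensen's formula makes `log ‖f‖` subharmonic, convexity of the exponential
passes this on to `‖f‖ ^ p` (`rpow_norm_le_circleAverage`), and an area integral in polar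
coordinates bounds `‖f w‖ ^ p` by the `H^p` norm, locally uniformly in `w` (`point_eval_bound`).
Hence bounded elements of the closure of `ℂ[B,g]` inherit two kinds of constraints from `B` and `g`
(`closure_constraints`): if `B` and `g` take equal values at two points, so does every such
element, and if `B'` and `g'` vanish at a point, so does its derivative. Applied to `J h` with
`h = z - w`, `h = 1` and `h = z`, these show that `g` separates `w₀` from the rest of its fiber
under `B`, and that `B'` and `g'` do not both vanish at `w₀`.

Under these two conditions the quotients `(g z - g w) / (z - w)` with `B w = B z`, `w ≠ z` and `z`
near `w₀` are bounded away from `0` (`exists_fiber_lower_bound`). For `z ≠ w₀` near `w₀` the point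
`z` is simple in its fiber (`eventually_calD_id_ne_zero`), so `Γ(g)(z)` is a product of at most
`n` such quotients and is bounded away from `0`; by continuity `Γ(g)(w₀) ≠ 0`.
-/

open Complex Polynomial MeasureTheory Metric Set Filter Topology
open scoped Classical

noncomputable section

/-- The open unit disk in `ℂ`. -/
def uDisk : Set ℂ := Metric.ball 0 1

/-- The closed unit disk in `ℂ`. -/
def cDisk : Set ℂ := Metric.closedBall 0 1

/-- The finite Blaschke product with zero set `a 0, …, a (n-1)`:
`B(z) = ∏_j (a_j - z)/(1 - conj(a_j)·z)`. -/
def blaschke {n : ℕ} (a : Fin n → ℂ) (z : ℂ) : ℂ :=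
  ∏ j, (a j - z) / (1 - (starRingEnd ℂ) (a j) * z)

/-- The multiset of the `n` solutions (with multiplicity) `φ_0(z) = z, φ_1(z), …, φ_{n-1}(z)`
of `B(w) = B(z)`, realized as the roots of the polynomial equation
`∏_j (a_j - w) = B(z) · ∏_j (1 - conj(a_j)·w)`. -/
def fiberMS {n : ℕ} (a : Fin n → ℂ) (z : ℂ) : Multiset ℂ :=
  ((∏ j, (Polynomial.C (a j) - Polynomial.X)) -
    Polynomial.C (blaschke a z) *
      ∏ j, (1 - Polynomial.C ((starRingEnd ℂ) (a j)) * Polynomial.X)).roots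

/-- `𝒟(f)(z) = ∏_{j=1}^{n-1} (f(z) - f(φ_j(z)))`, where `φ_1(z), …, φ_{n-1}(z)` is the
fiber of `B` over `B(z)` with one copy of `z` removed.  In particular
`calD a id z = ∏_{j=1}^{n-1} (z - φ_j(z))`. -/
def calD {n : ℕ} (a : Fin n → ℂ) (f : ℂ → ℂ) (z : ℂ) : ℂ :=
  (((fiberMS a z).erase z).map (fun w => f z - f w)).prod

/-- `G` is (the holomorphic extension after removing singularities of) `Γ(f) = 𝒟(f)/𝒟`. -/
def IsGamma {n : ℕ} (a : Fin n → ℂ) (f G : ℂ → ℂ) : Prop :=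
  DifferentiableOn ℂ G uDisk ∧ ∀ z ∈ uDisk, G z * calD a id z = calD a f z

/-- `p`-th power integral mean of `f` on the circle of radius `r`. -/
def circMean (p : ℝ) (f : ℂ → ℂ) (r : ℝ) : ℝ :=
  ∫ θ in (0:ℝ)..(2 * Real.pi), ‖f ((r : ℂ) * Complex.exp ((θ : ℂ) * Complex.I))‖ ^ p

/-- The `H^p` norm of `f` (for `0 < p < ∞`). -/
def hpNorm (p : ℝ) (f : ℂ → ℂ) : ℝ :=
  (sSup {m : ℝ | ∃ r ∈ Set.Ico (0:ℝ) 1, m = circMean p f r}) ^ (1 / p)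

/-- Membership in the Hardy space `H^p`, `0 < p < ∞`: holomorphic on the disk with
uniformly bounded integral means. -/
def MemHp (p : ℝ) (f : ℂ → ℂ) : Prop :=
  DifferentiableOn ℂ f uDisk ∧ ∃ C : ℝ, ∀ r ∈ Set.Ico (0:ℝ) 1, circMean p f r ≤ C

/-- Membership in `H^∞`: bounded holomorphic functions on the disk. -/
def MemHinf (f : ℂ → ℂ) : Prop :=
  DifferentiableOn ℂ f uDisk ∧ ∃ C : ℝ, ∀ z ∈ uDisk, ‖f z‖ ≤ C

/-- The `H^∞` (sup) norm. -/
def hinfNorm (f : ℂ → ℂ) : ℝ := sSup {m : ℝ | ∃ z ∈ uDisk, m = ‖f z‖}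

/-- The algebra of all polynomials in the functions `F 0, …, F (m-1)`. -/
def algGen (m : ℕ) (F : Fin m → (ℂ → ℂ)) : Set (ℂ → ℂ) :=
  {h | ∃ P : MvPolynomial (Fin m) ℂ, ∀ z : ℂ, h z = MvPolynomial.eval (fun i => F i z) P}

/-- The algebra `ℂ[F,G]` of all polynomials in the two functions `F` and `G`. -/
def algGen2 (F G : ℂ → ℂ) : Set (ℂ → ℂ) := algGen 2 ![F, G]

/-- The (sequential) closure of `S` in `H^p`. -/
def hpClosure (p : ℝ) (S : Set (ℂ → ℂ)) : Set (ℂ → ℂ) :=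
  {f | MemHp p f ∧ ∃ u : ℕ → (ℂ → ℂ), (∀ k, u k ∈ S) ∧
    Filter.Tendsto (fun k => hpNorm p (fun z => f z - u k z)) Filter.atTop (nhds 0)}

/-- `S` has finite codimension in `H^p`: finitely many functions in `H^p` together with `S`
span all of `H^p`. -/
def FiniteCodimHp (p : ℝ) (S : Set (ℂ → ℂ)) : Prop :=
  ∃ (k : ℕ) (e : Fin k → (ℂ → ℂ)), (∀ i, MemHp p (e i)) ∧
    ∀ f, MemHp p f → ∃ (c : Fin k → ℂ) (s : ℂ → ℂ), s ∈ S ∧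
      ∀ z ∈ uDisk, f z = s z + ∑ i, c i * e i z

/-- Inner function: bounded by 1, holomorphic, radial limits of modulus 1 a.e. -/
def IsInner (f : ℂ → ℂ) : Prop :=
  DifferentiableOn ℂ f uDisk ∧ (∀ z ∈ uDisk, ‖f z‖ ≤ 1) ∧
  ∀ᵐ θ : ℝ ∂volume, ∃ l : ℂ, ‖l‖ = 1 ∧
    Filter.Tendsto (fun r : ℝ => f ((r : ℂ) * Complex.exp ((θ : ℂ) * Complex.I)))
      (nhdsWithin 1 (Set.Iio 1)) (nhds l)

/-- `J` divides `h`, with a quotient holomorphic on the disk. -/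
def InnerDivides (J h : ℂ → ℂ) : Prop :=
  ∃ k : ℂ → ℂ, DifferentiableOn ℂ k uDisk ∧ ∀ z ∈ uDisk, h z = J z * k z

/-- Outer function: a holomorphic function on the disk whose only inner divisors are
unimodular constants (i.e. whose inner part is a unimodular constant). -/
def IsOuter (h : ℂ → ℂ) : Prop :=
  DifferentiableOn ℂ h uDisk ∧
  ∀ J : ℂ → ℂ, IsInner J → InnerDivides J h →
    ∃ c : ℂ, ‖c‖ = 1 ∧ ∀ z ∈ uDisk, J z = c

/-- `I` is the inner part of `h`: `I` is inner and `h = I·F` with `F` outer. -/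
def IsInnerPartOf (I h : ℂ → ℂ) : Prop :=
  IsInner I ∧ ∃ F : ℂ → ℂ, IsOuter F ∧ ∀ z ∈ uDisk, h z = I z * F z

/-- Finite Blaschke product (up to a unimodular constant factor). -/
def IsFiniteBlaschke (f : ℂ → ℂ) : Prop :=
  ∃ (m : ℕ) (c : ℂ) (b : Fin m → ℂ), ‖c‖ = 1 ∧ (∀ i, b i ∈ uDisk) ∧
    ∀ z ∈ uDisk, f z = c * ∏ i, (b i - z) / (1 - (starRingEnd ℂ) (b i) * z)

/-- `h` has no singular inner factor: every zero-free inner divisor of `h` is a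
unimodular constant. -/
def NoSingularInnerFactor (h : ℂ → ℂ) : Prop :=
  ∀ J : ℂ → ℂ, IsInner J → (∀ z ∈ uDisk, J z ≠ 0) → InnerDivides J h →
    ∃ c : ℂ, ‖c‖ = 1 ∧ ∀ z ∈ uDisk, J z = c

/-! ### Point evaluations on `H^p` -/

/-- Sub-mean value inequality for `‖f‖ ^ p`, valid for every `p > 0`: Jensen's formula gives
subharmonicity of `log ‖f‖`, and `x ↦ exp (p * x)` is convex and increasing. -/
lemma rpow_norm_le_circleAverage {f : ℂ → ℂ} {c : ℂ} {R p : ℝ} (hR : 0 < R) (hp : 0 < p)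
    (hf : AnalyticOnNhd ℂ f (closedBall c R)) :
    ‖f c‖ ^ p ≤ Real.circleAverage (fun z => ‖f z‖ ^ p) c R := by
  by_cases hc : f c = 0
  · rw [hc, norm_zero, Real.zero_rpow hp.ne']
    exact Real.circleAverage_nonneg_of_nonneg fun x _ => by positivity
  have habs : |R| = R := abs_of_pos hR
  have hf' : AnalyticOnNhd ℂ f (closedBall c |R|) := by rwa [habs]
  have hcm : c ∈ closedBall c |R| := by simp
  -- Jensen's formula: the zeros contribute a nonnegative amount.
  have h1 : Real.log ‖f c‖ ≤ Real.circleAverage (fun z => Real.log ‖f z‖) c R := by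
    rw [AnalyticOnNhd.circleAverage_log_norm hR.ne' hf' hc]
    have : 0 ≤ ∑ᶠ u, (MeromorphicOn.divisor f (closedBall c |R|) u : ℝ)
        * Real.log (R * ‖c - u‖⁻¹) := by
      apply finsum_nonneg
      intro u
      by_cases hu : u ∈ closedBall c |R|
      · apply mul_nonneg
        · exact_mod_cast MeromorphicOn.AnalyticOnNhd.divisor_nonneg hf' u
        · by_cases huc : c = u
          · simp [huc]
          · apply Real.log_nonneg
            have : 0 < ‖c - u‖ := norm_pos_iff.2 (sub_ne_zero.2 huc)
            rw [← div_eq_mul_inv, le_div_iff₀ this, one_mul, ← dist_eq_norm, dist_comm]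
            rw [habs] at hu
            exact hu
      · rw [Function.locallyFinsuppWithin.apply_eq_zero_of_notMem _ hu]; simp
    linarith
  have hcont : ContinuousOn f (sphere c R) := hf.continuousOn.mono sphere_subset_closedBall
  have hli : CircleIntegrable (fun z => Real.log ‖f z‖) c R :=
    MeromorphicOn.circleIntegrable_log_norm
      (fun z hz => (hf' z (sphere_subset_closedBall hz)).meromorphicAt)
  -- `exp (p * log 0) = 1` differs from `0 ^ p = 0`, but zeros of `f` on the circle are isolated.
  have hcod : (fun z => ‖f z‖ ^ p) =ᶠ[codiscreteWithin (sphere c |R|)]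
      fun z => Real.exp (p * Real.log ‖f z‖) := by
    have h0 := hf'.preimage_zero_mem_codiscreteWithin hc hcm
      ⟨⟨c, hcm⟩, (convex_closedBall c |R|).isPreconnected⟩
    have h0' := Filter.codiscreteWithin_mono (sphere_subset_closedBall (x := c) (ε := |R|)) h0
    filter_upwards [h0'] with z hz
    have hz' : 0 < ‖f z‖ := norm_pos_iff.2 (by simpa using hz)
    rw [Real.rpow_def_of_pos hz', mul_comm]
  have hli' : CircleIntegrable (fun z => Real.exp (p * Real.log ‖f z‖)) c R := by
    refine CircleIntegrable.congr_codiscreteWithin hcod ?_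
    exact ContinuousOn.circleIntegrable hR.le
      (hcont.norm.rpow_const fun _ _ => Or.inr hp.le)
  rw [Real.circleAverage_congr_codiscreteWithin hcod hR.ne']
  rw [Real.circleAverage_eq_intervalAverage] at h1 ⊢
  have hπ : (0:ℝ) < 2 * Real.pi := by positivity
  rw [uIoc_of_le hπ.le] at h1 ⊢
  have : NeZero (volume.restrict (Ioc (0:ℝ) (2 * Real.pi))) := ⟨by simp [Real.pi_pos]⟩
  have hconv : ConvexOn ℝ univ fun x : ℝ => Real.exp (p * x) :=
    convexOn_exp.comp_linearMap (LinearMap.mul ℝ ℝ p)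
  have h2 := hconv.map_average_le (μ := volume.restrict (Ioc (0:ℝ) (2 * Real.pi)))
    (f := fun θ => Real.log ‖f (circleMap c R θ)‖) (by fun_prop) isClosed_univ (by simp)
    ((intervalIntegrable_iff_integrableOn_Ioc_of_le hπ.le).1 hli)
    ((intervalIntegrable_iff_integrableOn_Ioc_of_le hπ.le).1 hli')
  refine le_trans ?_ h2
  rw [Real.rpow_def_of_pos (norm_pos_iff.2 hc), mul_comm]
  gcongr

/-- Integration over a disc in polar coordinates. -/
lemma lintegral_ball_polar {F : ℂ → ENNReal} (hF : Measurable F) (R : ℝ) :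
    ∫⁻ z in ball 0 R, F z =
      ∫⁻ r in Ioo 0 R, ENNReal.ofReal r *
        ∫⁻ θ in Ioo (-Real.pi) Real.pi, F (circleMap 0 r θ) := by
  have hcm : Continuous fun q : ℝ × ℝ => circleMap 0 q.1 q.2 := by
    unfold circleMap; fun_prop
  have hsymm : ∀ q : ℝ × ℝ, Complex.polarCoord.symm q = circleMap 0 q.1 q.2 := by
    intro q
    simp [circleMap, Complex.exp_mul_I]
  rw [← lintegral_indicator measurableSet_ball, ← Complex.lintegral_comp_polarCoord_symm]
  rw [polarCoord_target, Measure.volume_eq_prod, ← Measure.prod_restrict, lintegral_prod]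
  · rw [← lintegral_indicator measurableSet_Ioi, ← lintegral_indicator measurableSet_Ioo]
    refine lintegral_congr fun r => ?_
    by_cases hr : 0 < r
    · have hnorm : ∀ θ, ‖circleMap 0 r θ‖ = r := fun θ => by simp [abs_of_pos hr]
      by_cases hrR : r < R
      · rw [indicator_of_mem (show r ∈ Ioi 0 from hr),
          indicator_of_mem (show r ∈ Ioo 0 R from ⟨hr, hrR⟩)]
        simp only [hsymm, smul_eq_mul]
        rw [lintegral_const_mul]
        · congr 1
          refine lintegral_congr fun θ => ?_
          rw [indicator_of_mem]
          simp [abs_of_pos hr, hrR]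
        · exact (hF.indicator measurableSet_ball).comp (by fun_prop)
      · rw [indicator_of_mem (show r ∈ Ioi 0 from hr), indicator_of_notMem (fun h => hrR h.2)]
        simp only [hsymm, smul_eq_mul]
        rw [lintegral_eq_zero_iff']
        · refine Eventually.of_forall fun θ => ?_
          simp only [Pi.zero_apply]
          rw [indicator_of_notMem, mul_zero]
          simp [abs_of_pos hr, not_lt.1 hrR]
        · exact (((hF.indicator measurableSet_ball).comp (by fun_prop)).const_mul _).aemeasurable
    · rw [indicator_of_notMem (by simpa using hr), indicator_of_notMem (fun h => hr h.1)]
  · simp only [hsymm, smul_eq_mul]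
    exact (((ENNReal.measurable_ofReal.comp measurable_fst)).mul
      ((hF.indicator measurableSet_ball).comp hcm.measurable)).aemeasurable

lemma lintegral_circle {φ : ℂ → ℝ} {c : ℂ} {r : ℝ} (hr : 0 ≤ r)
    (hφ : ContinuousOn φ (sphere c r)) (h0 : ∀ z, 0 ≤ φ z) :
    ∫⁻ θ in Ioo (-Real.pi) Real.pi, ENNReal.ofReal (φ (circleMap c r θ)) =
      ENNReal.ofReal (2 * Real.pi * Real.circleAverage φ c r) := by
  have hc : Continuous fun θ : ℝ => φ (circleMap c r θ) :=
    hφ.comp_continuous (continuous_circleMap c r) fun θ => circleMap_mem_sphere c hr θ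
  rw [Real.circleAverage_eq_integral_add (-Real.pi)]
  rw [intervalIntegral.integral_comp_add_right (fun θ => φ (circleMap c r θ)), smul_eq_mul,
    mul_inv_cancel_left₀ (by positivity)]
  rw [show (0:ℝ) + -Real.pi = -Real.pi by ring, show 2 * Real.pi + -Real.pi = Real.pi by ring]
  rw [intervalIntegral.integral_of_le (by linarith [Real.pi_pos]),
    ofReal_integral_eq_lintegral_ofReal, setLIntegral_congr Ioo_ae_eq_Ioc]
  · exact (hc.intervalIntegrable _ _).1
  · exact Eventually.of_forall fun θ => h0 _

/-- Quantitative continuity of point evaluations on `H^p`: average the sub-mean value inequality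
over the circles in a disc around `w` and compare with the area integral over the unit disk. -/
lemma point_eval_bound {f : ℂ → ℂ} {p M ρ : ℝ} {w : ℂ} (hp : 0 < p)
    (hf : DifferentiableOn ℂ f uDisk) (hM : ∀ r ∈ Ico (0:ℝ) 1, circMean p f r ≤ M)
    (hρ : 0 < ρ) (hw : ‖w‖ + ρ ≤ 1) :
    Real.pi * ρ ^ 2 * ‖f w‖ ^ p ≤ M := by
  have hopen : IsOpen uDisk := isOpen_ball
  have han : AnalyticOnNhd ℂ f uDisk := hf.analyticOnNhd hopen
  have hcont : ContinuousOn (fun z => ‖f z‖ ^ p) uDisk :=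
    hf.continuousOn.norm.rpow_const fun _ _ => Or.inr hp.le
  set F : ℂ → ENNReal := fun z => if z ∈ uDisk then ENNReal.ofReal (‖f z‖ ^ p) else 0 with hFdef
  have hF : Measurable F := by
    have h : ContinuousOn (fun z => ENNReal.ofReal (‖f z‖ ^ p)) uDisk :=
      ENNReal.continuous_ofReal.comp_continuousOn hcont
    exact h.measurable_piecewise continuousOn_const hopen.measurableSet
  have hM0 : 0 ≤ M := by
    refine le_trans ?_ (hM 0 (by simp))
    exact intervalIntegral.integral_nonneg (by positivity) fun _ _ => by positivity
  have hsub : ball w ρ ⊆ ball 0 1 := ball_subset_ball' (by simpa [add_comm] using hw)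
  have hup : ∫⁻ z in ball 0 1, F z ≤ ENNReal.ofReal M := by
    rw [lintegral_ball_polar hF]
    calc _ ≤ ∫⁻ r in Ioo (0:ℝ) 1, ENNReal.ofReal M := by
          refine setLIntegral_mono' measurableSet_Ioo fun r hr => ?_
          have hin : ∀ θ, circleMap 0 r θ ∈ uDisk := fun θ => by
            simp [uDisk, abs_of_pos hr.1, hr.2]
          have : ∫⁻ θ in Ioo (-Real.pi) Real.pi, F (circleMap 0 r θ)
              = ENNReal.ofReal (circMean p f r) := by
            simp only [hFdef, hin, if_true]
            rw [lintegral_circle (φ := fun z => ‖f z‖ ^ p) hr.1.le]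
            · congr 1
              rw [Real.circleAverage_def, smul_eq_mul, mul_inv_cancel_left₀ (by positivity)]
              simp [circMean, circleMap]
            · refine hcont.mono fun z hz => ?_
              simp only [uDisk, mem_ball, mem_sphere] at hz ⊢
              rw [hz]; exact hr.2
            · intro z; positivity
          rw [this]
          calc _ ≤ 1 * ENNReal.ofReal M := by
                gcongr
                · exact ENNReal.ofReal_le_one.2 hr.2.le
                · exact hM r ⟨hr.1.le, hr.2⟩
            _ = _ := one_mul _
      _ = ENNReal.ofReal M := by simp
  have hlow : ENNReal.ofReal (Real.pi * ρ ^ 2 * ‖f w‖ ^ p) ≤ ∫⁻ z in ball w ρ, F z := by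
    have htr : ∫⁻ z in ball w ρ, F z = ∫⁻ z in ball 0 ρ, F (w + z) := by
      rw [← (measurePreserving_add_left volume w).setLIntegral_comp_preimage measurableSet_ball hF]
      congr 2
      ext z; simp [dist_eq_norm]
    rw [htr, lintegral_ball_polar (F := fun z => F (w + z)) (by fun_prop)]
    have hF' : ∀ r ∈ Ioo 0 ρ, ENNReal.ofReal (2 * Real.pi * ‖f w‖ ^ p) ≤
        ∫⁻ θ in Ioo (-Real.pi) Real.pi, F (w + circleMap 0 r θ) := by
      intro r hr
      have hcb : closedBall w r ⊆ uDisk :=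
        (closedBall_subset_ball hr.2).trans hsub
      have heq : ∀ θ, w + circleMap 0 r θ = circleMap w r θ := fun θ => by simp [circleMap]
      have hin : ∀ θ, circleMap w r θ ∈ uDisk := fun θ =>
        hcb (circleMap_mem_closedBall w hr.1.le θ)
      simp only [heq, hFdef, hin, if_true]
      rw [lintegral_circle (φ := fun z => ‖f z‖ ^ p) hr.1.le]
      · gcongr
        exact rpow_norm_le_circleAverage hr.1 hp (han.mono hcb)
      · exact hcont.mono (sphere_subset_closedBall.trans hcb)
      · intro z; positivity
    calc ENNReal.ofReal (Real.pi * ρ ^ 2 * ‖f w‖ ^ p)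
        = ∫⁻ r in Ioo 0 ρ, ENNReal.ofReal r * ENNReal.ofReal (2 * Real.pi * ‖f w‖ ^ p) := by
          rw [lintegral_mul_const _ (by fun_prop), setLIntegral_congr Ioo_ae_eq_Ioc,
            ← ofReal_integral_eq_lintegral_ofReal, ← intervalIntegral.integral_of_le hρ.le,
            integral_id, ← ENNReal.ofReal_mul (by nlinarith [sq_nonneg ρ])]
          · congr 1; ring
          · exact (continuous_id.intervalIntegrable _ _).1
          · filter_upwards [ae_restrict_mem measurableSet_Ioc] with r hr using hr.1.le
      _ ≤ _ := setLIntegral_mono' measurableSet_Ioo fun r hr => by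
          gcongr
          exact hF' r hr
  have := (hlow.trans (lintegral_mono_set hsub)).trans hup
  exact (ENNReal.ofReal_le_ofReal_iff hM0).1 this

lemma circMean_le_of_bounded {f : ℂ → ℂ} {p K : ℝ} (hp : 0 < p)
    (hK : ∀ z ∈ uDisk, ‖f z‖ ≤ K) {r : ℝ} (hr : r ∈ Ico (0:ℝ) 1) :
    circMean p f r ≤ K ^ p * |2 * Real.pi - 0| := by
  refine (le_abs_self _).trans ?_
  rw [← Real.norm_eq_abs]
  refine intervalIntegral.norm_integral_le_of_norm_le_const fun θ _ => ?_
  rw [Real.norm_of_nonneg (by positivity)]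
  refine Real.rpow_le_rpow (norm_nonneg _) (hK _ ?_) hp.le
  simp [uDisk, Complex.norm_exp_ofReal_mul_I, abs_of_nonneg hr.1, hr.2]

lemma memHp_of_bounded {f : ℂ → ℂ} {p : ℝ} (hp : 0 < p) (hf : MemHinf f) : MemHp p f := by
  obtain ⟨hd, K, hK⟩ := hf
  exact ⟨hd, _, fun r hr => circMean_le_of_bounded hp hK hr⟩

/-- Boundedness of `f` ensures that the supremum in `hpNorm` is a genuine one. -/
lemma point_eval_le_hpNorm {f : ℂ → ℂ} {p ρ : ℝ} {w : ℂ} (hp : 0 < p) (hf : MemHinf f)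
    (hρ : 0 < ρ) (hw : ‖w‖ + ρ ≤ 1) :
    (Real.pi * ρ ^ 2) ^ (1 / p) * ‖f w‖ ≤ hpNorm p f := by
  obtain ⟨hd, K, hK⟩ := hf
  set S := {m : ℝ | ∃ r ∈ Set.Ico (0:ℝ) 1, m = circMean p f r} with hS
  have hbdd : BddAbove S := by
    refine ⟨K ^ p * |2 * Real.pi - 0|, ?_⟩
    rintro m ⟨r, hr, rfl⟩
    exact circMean_le_of_bounded hp hK hr
  have h := point_eval_bound (M := sSup S) hp hd (fun r hr => le_csSup hbdd ⟨r, hr, rfl⟩) hρ hw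
  have h2 := Real.rpow_le_rpow (by positivity) h (show 0 ≤ 1 / p by positivity)
  rw [Real.mul_rpow (by positivity) (by positivity), ← Real.rpow_mul (norm_nonneg _),
    mul_one_div_cancel hp.ne', Real.rpow_one] at h2
  exact h2

/-- Convergence in `H^p` of bounded functions implies locally uniform convergence on the disk. -/
lemma tendstoLocallyUniformlyOn_of_hpNorm {f : ℂ → ℂ} {u : ℕ → ℂ → ℂ} {p : ℝ} (hp : 0 < p)
    (hb : ∀ k, MemHinf fun z => f z - u k z)
    (hlim : Tendsto (fun k => hpNorm p (fun z => f z - u k z)) atTop (𝓝 0)) :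
    TendstoLocallyUniformlyOn u f atTop uDisk := by
  rw [Metric.tendstoLocallyUniformlyOn_iff]
  intro ε hε x hx
  have hx1 : ‖x‖ < 1 := by simpa [uDisk] using hx
  set ρ := (1 - ‖x‖) / 2 with hρdef
  have hρ : 0 < ρ := by rw [hρdef]; linarith
  refine ⟨ball x ρ, mem_nhdsWithin_of_mem_nhds (ball_mem_nhds x hρ), ?_⟩
  have hC : 0 < (Real.pi * ρ ^ 2) ^ (1 / p) := by positivity
  filter_upwards [hlim.eventually (gt_mem_nhds (mul_pos hC hε))] with k hk y hy
  have hy1 : ‖y‖ + ρ ≤ 1 := by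
    have h1 : ‖y‖ ≤ ‖y - x‖ + ‖x‖ := by simpa using norm_add_le (y - x) x
    have h2 : ‖y - x‖ < ρ := by simpa [dist_eq_norm] using hy
    have h3 : ρ + ρ = 1 - ‖x‖ := by rw [hρdef]; ring
    linarith
  rw [dist_eq_norm]
  exact lt_of_mul_lt_mul_left ((point_eval_le_hpNorm hp (hb k) hρ hy1).trans_lt hk) hC.le

/-! ### The algebra `ℂ[F,G]` and its closure -/

lemma memHinf_mul {f g : ℂ → ℂ} (hf : MemHinf f) (hg : MemHinf g) :
    MemHinf fun z => f z * g z := by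
  obtain ⟨hf, K, hK⟩ := hf
  obtain ⟨hg, L, hL⟩ := hg
  refine ⟨hf.mul hg, K * L, fun z hz => ?_⟩
  rw [norm_mul]
  exact mul_le_mul (hK z hz) (hL z hz) (norm_nonneg _) ((norm_nonneg _).trans (hK z hz))

lemma memHinf_add {f g : ℂ → ℂ} (hf : MemHinf f) (hg : MemHinf g) :
    MemHinf fun z => f z + g z := by
  obtain ⟨hf, K, hK⟩ := hf
  obtain ⟨hg, L, hL⟩ := hg
  exact ⟨hf.add hg, K + L, fun z hz => (norm_add_le _ _).trans (add_le_add (hK z hz) (hL z hz))⟩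

lemma memHinf_sub {f g : ℂ → ℂ} (hf : MemHinf f) (hg : MemHinf g) :
    MemHinf fun z => f z - g z := by
  obtain ⟨hf, K, hK⟩ := hf
  obtain ⟨hg, L, hL⟩ := hg
  exact ⟨hf.sub hg, K + L, fun z hz => (norm_sub_le _ _).trans (add_le_add (hK z hz) (hL z hz))⟩

lemma memHinf_const (c : ℂ) : MemHinf fun _ => c :=
  ⟨differentiableOn_const c, ‖c‖, fun _ _ => le_rfl⟩

lemma memHinf_id : MemHinf fun z => z :=
  ⟨differentiableOn_id, 1, fun z hz => by
    have : ‖z‖ < 1 := by simpa [uDisk] using hz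
    exact this.le⟩

lemma memHinf_algGen2 {F G u : ℂ → ℂ} (hF : MemHinf F) (hG : MemHinf G)
    (hu : u ∈ algGen2 F G) : MemHinf u := by
  obtain ⟨P, hP⟩ := hu
  obtain rfl : u = fun z => MvPolynomial.eval (fun i => (![F, G] : Fin 2 → ℂ → ℂ) i z) P :=
    funext hP
  clear hP
  induction P using MvPolynomial.induction_on with
  | C c => simpa using memHinf_const c
  | add P Q hP hQ => simpa using memHinf_add hP hQ
  | mul_X P i hP =>
    have hi : MemHinf ((![F, G] : Fin 2 → ℂ → ℂ) i) := by
      fin_cases i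
      · exact hF
      · exact hG
    simpa using memHinf_mul hP hi

lemma algGen2_eq_of_eq {F G u : ℂ → ℂ} {z w : ℂ} (hF : F z = F w) (hG : G z = G w)
    (hu : u ∈ algGen2 F G) : u z = u w := by
  obtain ⟨P, hP⟩ := hu
  rw [hP, hP]
  congr 2
  funext i
  fin_cases i
  · exact hF
  · exact hG

lemma algGen2_hasDerivAt_zero {F G u : ℂ → ℂ} {w : ℂ} (hF : HasDerivAt F 0 w)
    (hG : HasDerivAt G 0 w) (hu : u ∈ algGen2 F G) : HasDerivAt u 0 w := by
  obtain ⟨P, hP⟩ := hu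
  obtain rfl : u = fun z => MvPolynomial.eval (fun i => (![F, G] : Fin 2 → ℂ → ℂ) i z) P :=
    funext hP
  clear hP
  induction P using MvPolynomial.induction_on with
  | C c => simpa using hasDerivAt_const w c
  | add P Q hP hQ => simpa using hP.fun_add hQ
  | mul_X P i hP =>
    have hi : HasDerivAt ((![F, G] : Fin 2 → ℂ → ℂ) i) 0 w := by
      fin_cases i
      · exact hF
      · exact hG
    simp only [map_mul, MvPolynomial.eval_X]
    simpa using hP.fun_mul hi

/-- Members of the `H^p`-closure of `ℂ[F,G]` that are bounded inherit, through locally uniform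
convergence, identifications of points and vanishing of derivatives common to `F` and `G`. -/
lemma closure_constraints {F G f : ℂ → ℂ} {p : ℝ} (hp : 0 < p) (hF : MemHinf F) (hG : MemHinf G)
    (hf : MemHinf f) (hcl : f ∈ hpClosure p (algGen2 F G)) :
    (∀ z ∈ uDisk, ∀ w ∈ uDisk, F z = F w → G z = G w → f z = f w) ∧
    (∀ w ∈ uDisk, HasDerivAt F 0 w → HasDerivAt G 0 w → deriv f w = 0) := by
  obtain ⟨-, u, hu, hlim⟩ := hcl
  have hub : ∀ k, MemHinf (u k) := fun k => memHinf_algGen2 hF hG (hu k)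
  have hconv := tendstoLocallyUniformlyOn_of_hpNorm hp (fun k => memHinf_sub hf (hub k)) hlim
  refine ⟨fun z hz w hw hFzw hGzw => ?_, fun w hw hFw hGw => ?_⟩
  · refine tendsto_nhds_unique (hconv.tendsto_at hz) ?_
    simp only [fun k => algGen2_eq_of_eq hFzw hGzw (hu k)]
    exact hconv.tendsto_at hw
  · have hd := (hconv.deriv (Eventually.of_forall fun k => (hub k).1) isOpen_ball).tendsto_at hw
    refine tendsto_nhds_unique hd ?_
    simp only [Function.comp_apply, fun k => (algGen2_hasDerivAt_zero hFw hGw (hu k)).deriv]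
    exact tendsto_const_nhds

/-! ### Fibers of a finite Blaschke product -/

lemma norm_lt_one_of_mem {z : ℂ} (hz : z ∈ uDisk) : ‖z‖ < 1 := by simpa [uDisk] using hz

lemma blaschke_factor_identity (α z : ℂ) :
    ‖1 - (starRingEnd ℂ) α * z‖ ^ 2 - ‖α - z‖ ^ 2 = (1 - ‖α‖ ^ 2) * (1 - ‖z‖ ^ 2) := by
  simp only [Complex.sq_norm, Complex.normSq_apply]
  simp
  ring

lemma one_sub_conj_mul_ne_zero {α z : ℂ} (hα : α ∈ uDisk) (hz : ‖z‖ ≤ 1) :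
    1 - (starRingEnd ℂ) α * z ≠ 0 := by
  intro h
  have h1 : (starRingEnd ℂ) α * z = 1 := (sub_eq_zero.1 h).symm
  have h2 : ‖α‖ * ‖z‖ = 1 := by simpa using congrArg norm h1
  nlinarith [norm_lt_one_of_mem hα, norm_nonneg z, norm_nonneg α]

lemma norm_blaschke_factor_le {α z : ℂ} (hα : α ∈ uDisk) (hz : ‖z‖ ≤ 1) :
    ‖α - z‖ ≤ ‖1 - (starRingEnd ℂ) α * z‖ := by
  have h := blaschke_factor_identity α z
  have h1 := norm_lt_one_of_mem hα
  have h2 : 0 ≤ (1 - ‖α‖ ^ 2) * (1 - ‖z‖ ^ 2) :=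
    mul_nonneg (by nlinarith [norm_nonneg α]) (by nlinarith [norm_nonneg z])
  exact (sq_le_sq₀ (norm_nonneg _) (norm_nonneg _)).1 (by linarith)

lemma norm_blaschke_factor_ge {α z : ℂ} (hα : α ∈ uDisk) (hz : 1 ≤ ‖z‖) :
    ‖1 - (starRingEnd ℂ) α * z‖ ≤ ‖α - z‖ := by
  have h := blaschke_factor_identity α z
  have h1 := norm_lt_one_of_mem hα
  have h2 : (1 - ‖α‖ ^ 2) * (1 - ‖z‖ ^ 2) ≤ 0 :=
    mul_nonpos_of_nonneg_of_nonpos (by nlinarith [norm_nonneg α]) (by nlinarith)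
  exact (sq_le_sq₀ (norm_nonneg _) (norm_nonneg _)).1 (by linarith)

section
variable {n : ℕ} {a : Fin n → ℂ}

lemma differentiableOn_blaschke (ha : ∀ j, a j ∈ uDisk) :
    DifferentiableOn ℂ (blaschke a) uDisk := by
  unfold blaschke
  refine DifferentiableOn.fun_finsetProd fun j _ => ?_
  refine DifferentiableOn.div (by fun_prop) (by fun_prop) fun z hz => ?_
  exact one_sub_conj_mul_ne_zero (ha j) (norm_lt_one_of_mem hz).le

/-- One of the zeros being the origin, `‖B z‖ ≤ ‖z‖ < 1` on the disk. -/
lemma norm_blaschke_lt_one (ha : ∀ j, a j ∈ uDisk) {j₀ : Fin n} (hj₀ : a j₀ = 0) {z : ℂ}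
    (hz : z ∈ uDisk) : ‖blaschke a z‖ < 1 := by
  have hz1 := norm_lt_one_of_mem hz
  unfold blaschke
  rw [norm_prod, ← Finset.mul_prod_erase _ _ (Finset.mem_univ j₀)]
  have h1 : ∏ j ∈ Finset.univ.erase j₀,
      ‖(a j - z) / (1 - (starRingEnd ℂ) (a j) * z)‖ ≤ 1 := by
    refine Finset.prod_le_one (fun _ _ => norm_nonneg _) fun j _ => ?_
    rw [norm_div]
    exact div_le_one_of_le₀ (norm_blaschke_factor_le (ha j) hz1.le) (norm_nonneg _)
  have h2 : ‖(a j₀ - z) / (1 - (starRingEnd ℂ) (a j₀) * z)‖ = ‖z‖ := by simp [hj₀]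
  rw [h2]
  have := mul_le_mul_of_nonneg_left h1 (norm_nonneg z)
  linarith

/-- The denominator-free equation `N(w) = B(z) D(w)` defining `fiberMS`. -/
def InFiber (a : Fin n → ℂ) (z w : ℂ) : Prop :=
  ∏ j, (a j - w) = blaschke a z * ∏ j, (1 - (starRingEnd ℂ) (a j) * w)

lemma InFiber.blaschke_eq (ha : ∀ j, a j ∈ uDisk) {z w : ℂ} (hw : w ∈ uDisk)
    (h : InFiber a z w) : blaschke a z = blaschke a w := by
  have hD : ∏ j, (1 - (starRingEnd ℂ) (a j) * w) ≠ 0 :=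
    Finset.prod_ne_zero_iff.2 fun j _ =>
      one_sub_conj_mul_ne_zero (ha j) (norm_lt_one_of_mem hw).le
  conv_rhs => unfold blaschke
  rw [Finset.prod_div_distrib, eq_div_iff hD]
  exact h.symm

lemma InFiber.mem_uDisk (ha : ∀ j, a j ∈ uDisk) {z w : ℂ} (hB : ‖blaschke a z‖ < 1)
    (h : InFiber a z w) : w ∈ uDisk := by
  by_contra hw
  have hw1 : 1 ≤ ‖w‖ := by simpa [uDisk] using hw
  have h1 : ∏ j, ‖1 - (starRingEnd ℂ) (a j) * w‖ ≤ ∏ j, ‖a j - w‖ :=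
    Finset.prod_le_prod (fun _ _ => norm_nonneg _) fun j _ => norm_blaschke_factor_ge (ha j) hw1
  have h2 : 0 < ∏ j, ‖a j - w‖ := by
    refine Finset.prod_pos fun j _ => norm_pos_iff.2 (sub_ne_zero.2 ?_)
    rintro rfl
    exact hw (ha j)
  have h3 := congrArg norm h
  rw [norm_mul, norm_prod, norm_prod] at h3
  nlinarith [norm_nonneg (blaschke a z)]

/-- The polynomial whose roots form `fiberMS`. -/
def fiberPoly (a : Fin n → ℂ) (z : ℂ) : ℂ[X] :=
  (∏ j, (Polynomial.C (a j) - Polynomial.X)) -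
    Polynomial.C (blaschke a z) *
      ∏ j, (1 - Polynomial.C ((starRingEnd ℂ) (a j)) * Polynomial.X)

lemma isRoot_fiberPoly {z w : ℂ} : (fiberPoly a z).IsRoot w ↔ InFiber a z w := by
  simp [fiberPoly, InFiber, Polynomial.IsRoot, Polynomial.eval_prod, sub_eq_zero]

lemma fiberPoly_ne_zero (ha : ∀ j, a j ∈ uDisk) {z : ℂ} (hB : ‖blaschke a z‖ < 1) :
    fiberPoly a z ≠ 0 := by
  intro h
  have h1 : InFiber a z 1 := isRoot_fiberPoly.1 (by simp [h])
  simpa using norm_lt_one_of_mem (h1.mem_uDisk ha hB)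

lemma inFiber_of_mem_fiberMS {z w : ℂ} (hw : w ∈ fiberMS a z) : InFiber a z w :=
  isRoot_fiberPoly.1 (Polynomial.isRoot_of_mem_roots hw)

lemma card_fiberMS_le (z : ℂ) : Multiset.card (fiberMS a z) ≤ n := by
  refine (Polynomial.card_roots' _).trans ?_
  refine (Polynomial.natDegree_sub_le _ _).trans (max_le ?_ ?_)
  · refine (Polynomial.natDegree_prod_le _ _).trans ?_
    refine (Finset.sum_le_card_nsmul _ _ 1 fun j _ => ?_).trans (by simp)
    compute_degree
  · refine (Polynomial.natDegree_C_mul_le _ _).trans ?_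
    refine (Polynomial.natDegree_prod_le _ _).trans ?_
    refine (Finset.sum_le_card_nsmul _ _ 1 fun j _ => ?_).trans (by simp)
    compute_degree

/-- Critical points of `B` are isolated: the Wronskian of numerator and denominator is a nonzero
polynomial, because the two are coprime and the numerator is nonconstant. So near any `w₀` all
other points are simple in their own fiber. -/
lemma eventually_calD_id_ne_zero (ha : ∀ j, a j ∈ uDisk) {j₀ : Fin n}
    (hj₀ : a j₀ = 0) {w₀ : ℂ} (hw₀ : w₀ ∈ uDisk) :
    ∀ᶠ z in 𝓝[≠] w₀, calD a id z ≠ 0 := by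
  set N : ℂ[X] := ∏ j, (Polynomial.C (a j) - Polynomial.X) with hN
  set D : ℂ[X] := ∏ j, (1 - Polynomial.C ((starRingEnd ℂ) (a j)) * Polynomial.X) with hD
  have hcop : IsCoprime N D := by
    refine IsCoprime.prod_left fun i _ => IsCoprime.prod_right fun j _ => ?_
    have hne := one_sub_conj_mul_ne_zero (ha j) (norm_lt_one_of_mem (ha i)).le
    set γ := 1 - (starRingEnd ℂ) (a j) * a i
    refine ⟨Polynomial.C (-γ⁻¹ * (starRingEnd ℂ) (a j)), Polynomial.C γ⁻¹, ?_⟩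
    have : Polynomial.C γ⁻¹ * Polynomial.C (1 - (starRingEnd ℂ) (a j) * a i) = (1 : ℂ[X]) := by
      rw [← Polynomial.C_mul, inv_mul_cancel₀ hne, Polynomial.C_1]
    simp only [map_sub, map_mul, map_neg, Polynomial.C_1] at this ⊢
    linear_combination this
  have hW : Polynomial.wronskian N D ≠ 0 := by
    intro h
    have hN' := (hcop.wronskian_eq_zero_iff.1 h).1
    obtain ⟨c, hc⟩ := Polynomial.natDegree_eq_zero.1
      (Polynomial.derivative_eq_zero.1 hN')
    have h0 : N.eval 0 = 0 := by
      rw [hN, Polynomial.eval_prod]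
      exact Finset.prod_eq_zero (Finset.mem_univ j₀) (by simp [hj₀])
    have h1 : N.eval 1 ≠ 0 := by
      rw [hN, Polynomial.eval_prod]
      refine Finset.prod_ne_zero_iff.2 fun j _ => ?_
      simp only [Polynomial.eval_sub, Polynomial.eval_C, Polynomial.eval_X]
      refine sub_ne_zero.2 fun h => ?_
      simpa [h] using norm_lt_one_of_mem (ha j)
    rw [← hc] at h0 h1
    simp only [Polynomial.eval_C] at h0 h1
    exact h1 h0
  have hfin : ∀ᶠ z in 𝓝[≠] w₀, ¬ (Polynomial.wronskian N D).IsRoot z := by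
    have hcl : IsClosed ({z | (Polynomial.wronskian N D).IsRoot z} \ {w₀}) :=
      ((Polynomial.finite_setOfPred_isRoot hW).subset sdiff_subset).isClosed
    have hnhds := hcl.isOpen_compl.mem_nhds (x := w₀) (by simp)
    filter_upwards [mem_nhdsWithin_of_mem_nhds hnhds, self_mem_nhdsWithin] with z hz hne hr
    exact hz ⟨hr, hne⟩
  have hdisk : ∀ᶠ z in 𝓝[≠] w₀, z ∈ uDisk :=
    mem_nhdsWithin_of_mem_nhds (isOpen_ball.mem_nhds hw₀)
  filter_upwards [hfin, hdisk] with z hz hzd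
  have hB := norm_blaschke_lt_one ha hj₀ hzd
  have hP : fiberPoly a z = N - Polynomial.C (blaschke a z) * D := rfl
  intro h0
  obtain ⟨w, hw, hw0⟩ := Multiset.mem_map.1 (Multiset.prod_eq_zero_iff.1 h0)
  obtain rfl : z = w := sub_eq_zero.1 hw0
  have hcount : 1 < (fiberPoly a z).rootMultiplicity z := by
    rw [← Polynomial.count_roots]
    have h1 := Multiset.one_le_count_iff_mem.2 hw
    rw [Multiset.count_erase_self] at h1
    have h2 : Multiset.count z (fiberMS a z) = Multiset.count z (fiberPoly a z).roots := rfl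
    omega
  rw [Polynomial.one_lt_rootMultiplicity_iff_isRoot (fiberPoly_ne_zero ha hB), hP] at hcount
  obtain ⟨h1, h2⟩ := hcount
  apply hz
  simp only [Polynomial.IsRoot, Polynomial.wronskian, Polynomial.derivative_sub,
    Polynomial.derivative_C_mul, Polynomial.eval_sub, Polynomial.eval_mul,
    Polynomial.eval_C] at h1 h2 ⊢
  linear_combination (Polynomial.eval z (Polynomial.derivative D)) * h1 - (Polynomial.eval z D) * h2

/-! ### Divided differences along fibers -/

lemma eventually_lower_bound_of_deriv_ne_zero {g : ℂ → ℂ} {g' w₀ : ℂ}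
    (hg : HasStrictDerivAt g g' w₀) (hg' : g' ≠ 0) :
    ∀ᶠ q in 𝓝 (w₀, w₀), ‖g'‖ / 2 * ‖q.1 - q.2‖ ≤ ‖g q.1 - g q.2‖ := by
  have h := hg.isLittleO.def (c := ‖g'‖ / 2) (by positivity)
  filter_upwards [h] with q hq
  have h1 : ‖(q.1 - q.2) * g'‖ ≤ ‖g q.1 - g q.2‖ + ‖g q.1 - g q.2 - (q.1 - q.2) * g'‖ := by
    have := norm_sub_le (g q.1 - g q.2) (g q.1 - g q.2 - (q.1 - q.2) * g')
    simpa using this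
  have h2 : ‖g q.1 - g q.2 - (q.1 - q.2) * g'‖ ≤ ‖g'‖ / 2 * ‖q.1 - q.2‖ := by simpa using hq
  rw [norm_mul] at h1
  linarith

/-- If `g` separates `w₀` from the rest of its fiber, and `B` and `g` have no common critical point
at `w₀`, then the divided differences of `g` along fibers of `B` near `w₀` are bounded away
from `0`. The proof is local in the second fiber point `w`, and compactness of the closed disk
globalizes it. -/
lemma exists_fiber_lower_bound (ha : ∀ j, a j ∈ uDisk) {j₀ : Fin n} (hj₀ : a j₀ = 0)
    {g : ℂ → ℂ} (hg : DifferentiableOn ℂ g uDisk) {w₀ : ℂ} (hw₀ : w₀ ∈ uDisk)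
    (hsep : ∀ w ∈ uDisk, w ≠ w₀ → blaschke a w = blaschke a w₀ → g w ≠ g w₀)
    (hcrit : deriv (blaschke a) w₀ ≠ 0 ∨ deriv g w₀ ≠ 0) :
    ∃ c > 0, ∀ᶠ z in 𝓝 w₀, ∀ w ∈ closedBall (0:ℂ) 1, InFiber a z w →
      c * ‖z - w‖ ≤ ‖g z - g w‖ := by
  have hopen : IsOpen uDisk := isOpen_ball
  have hBd := differentiableOn_blaschke ha
  have hBa : AnalyticOnNhd ℂ (blaschke a) uDisk := hBd.analyticOnNhd hopen
  have hga : AnalyticOnNhd ℂ g uDisk := hg.analyticOnNhd hopen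
  have hBc : ContinuousAt (blaschke a) w₀ := (hBa w₀ hw₀).continuousAt
  have hgc : ContinuousAt g w₀ := (hga w₀ hw₀).continuousAt
  refine (isCompact_closedBall (0:ℂ) 1).induction_on
    (p := fun s => ∃ c > 0, ∀ᶠ z in 𝓝 w₀, ∀ w ∈ s, InFiber a z w →
      c * ‖z - w‖ ≤ ‖g z - g w‖) ?_ ?_ ?_ ?_
  · exact ⟨1, one_pos, by simp⟩
  · rintro s t hst ⟨c, hc, h⟩
    exact ⟨c, hc, h.mono fun z hz w hw => hz w (hst hw)⟩
  · rintro s t ⟨c, hc, h⟩ ⟨d, hd, k⟩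
    refine ⟨min c d, lt_min hc hd, ?_⟩
    filter_upwards [h, k] with z hz kz w hw hfib
    rcases hw with hw | hw
    · exact (mul_le_mul_of_nonneg_right (min_le_left c d) (norm_nonneg _)).trans (hz w hw hfib)
    · exact (mul_le_mul_of_nonneg_right (min_le_right c d) (norm_nonneg _)).trans (kz w hw hfib)
  intro x _
  -- It suffices to bound the divided difference for `(z, w)` close to `(w₀, x)`.
  suffices H : ∃ c > 0, ∀ᶠ q in 𝓝 (w₀, x), InFiber a q.1 q.2 →
      c * ‖q.1 - q.2‖ ≤ ‖g q.1 - g q.2‖ by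
    obtain ⟨c, hc, h⟩ := H
    rw [nhds_prod_eq] at h
    obtain ⟨U, hU, V, hV, hUV⟩ := Filter.mem_prod_iff.1 h
    refine ⟨V, mem_nhdsWithin_of_mem_nhds hV, c, hc, ?_⟩
    filter_upwards [hU] with z hz w hw
    exact @hUV (z, w) ⟨hz, hw⟩
  have hB1 : ContinuousAt (fun q : ℂ × ℂ => blaschke a q.1) (w₀, x) :=
    ContinuousAt.comp (f := Prod.fst) (x := (w₀, x)) hBc continuousAt_fst
  by_cases hfib : InFiber a w₀ x
  · have hxd : x ∈ uDisk := hfib.mem_uDisk ha (norm_blaschke_lt_one ha hj₀ hw₀)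
    by_cases hx : x = w₀
    · subst hx
      rcases hcrit with hBne | hgne
      -- If the derivative of `B` is nonzero, then `B` is injective near `x`, so the fiber point is `z` itself.
      · refine ⟨1, one_pos, ?_⟩
        have hd : ∀ᶠ q : ℂ × ℂ in 𝓝 (x, x), q.2 ∈ uDisk :=
          continuousAt_snd.preimage_mem_nhds (hopen.mem_nhds hw₀)
        filter_upwards [hd, eventually_lower_bound_of_deriv_ne_zero
          (hBa x hw₀).hasStrictDerivAt hBne] with q hq2 hq hf
        rw [hf.blaschke_eq ha hq2, sub_self, norm_zero] at hq
        have h0 : ‖q.1 - q.2‖ ≤ 0 :=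
          le_of_mul_le_mul_left (by simpa using hq) (half_pos (norm_pos_iff.2 hBne))
        rw [one_mul]
        exact h0.trans (norm_nonneg _)
      · refine ⟨‖deriv g x‖ / 2, half_pos (norm_pos_iff.2 hgne), ?_⟩
        filter_upwards [eventually_lower_bound_of_deriv_ne_zero
          (hga x hw₀).hasStrictDerivAt hgne] with q hq _ using hq
    · have hgx : 0 < ‖g w₀ - g x‖ :=
        norm_pos_iff.2 (sub_ne_zero.2 (hsep x hxd hx (hfib.blaschke_eq ha hxd).symm).symm)
      have hdx : 0 < ‖w₀ - x‖ := norm_pos_iff.2 (sub_ne_zero.2 (Ne.symm hx))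
      refine ⟨‖g w₀ - g x‖ / (2 * ‖w₀ - x‖), by positivity, ?_⟩
      have hlt : ‖g w₀ - g x‖ / (2 * ‖w₀ - x‖) * ‖w₀ - x‖ < ‖g w₀ - g x‖ := by
        rw [div_mul_eq_mul_div, div_lt_iff₀ (by positivity)]
        nlinarith [mul_pos hgx hdx]
      have hg1 : ContinuousAt (fun q : ℂ × ℂ => g q.1) (w₀, x) :=
        ContinuousAt.comp (f := Prod.fst) (x := (w₀, x)) hgc continuousAt_fst
      have hg2 : ContinuousAt (fun q : ℂ × ℂ => g q.2) (w₀, x) :=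
        ContinuousAt.comp (f := Prod.snd) (x := (w₀, x)) (hga x hxd).continuousAt
          continuousAt_snd
      have hl : ContinuousAt (fun q : ℂ × ℂ =>
          ‖g w₀ - g x‖ / (2 * ‖w₀ - x‖) * ‖q.1 - q.2‖) (w₀, x) := by fun_prop
      filter_upwards [hl.eventually_lt (hg1.sub hg2).norm hlt] with q hq _ using hq.le
  -- Otherwise no fiber points occur near `x`, the fiber equation being a closed condition.
  · refine ⟨1, one_pos, ?_⟩
    have h1 : ContinuousAt (fun q : ℂ × ℂ => ∏ j, (a j - q.2)) (w₀, x) := by fun_prop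
    have h2 : ContinuousAt (fun q : ℂ × ℂ => ∏ j, (1 - (starRingEnd ℂ) (a j) * q.2)) (w₀, x) := by
      fun_prop
    filter_upwards [(h1.sub (hB1.mul h2)).eventually_ne (sub_ne_zero.2 hfib)] with q hq hf
    exact absurd (sub_eq_zero.2 hf) hq

end

lemma pow_mul_prod_le_prod {s : Multiset ℂ} {f h : ℂ → ℂ} {c : ℝ} (hc : 0 ≤ c)
    (H : ∀ w ∈ s, c * ‖f w‖ ≤ ‖h w‖) :
    c ^ Multiset.card s * ‖(s.map f).prod‖ ≤ ‖(s.map h).prod‖ := by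
  induction s using Multiset.induction_on with
  | empty => simp
  | cons b s ih =>
    have h1 := ih fun w hw => H w (Multiset.mem_cons_of_mem hw)
    have h2 := H b (Multiset.mem_cons_self b s)
    simp only [Multiset.map_cons, Multiset.prod_cons, Multiset.card_cons, norm_mul]
    calc _ = (c * ‖f b‖) * (c ^ Multiset.card s * ‖(s.map f).prod‖) := by ring
      _ ≤ _ := mul_le_mul h2 h1 (by positivity) (norm_nonneg _)

/-! ### Zeros of `Γ(g)` -/

/-- If `J` is inner and `J·H^p` is contained in the `H^p`-closure of
`ℂ[B,g]`, then `J` vanishes at every zero of `Γ(g)` in the disk. -/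
theorem stmt16 {n : ℕ} (hn : 2 ≤ n) (a : Fin n → ℂ) (ha : ∀ j, a j ∈ uDisk)
    (ha0 : a ⟨0, by omega⟩ = 0)
    (g Γg : ℂ → ℂ) (hg : MemHinf g) (hΓg : IsGamma a g Γg)
    (p : ℝ) (hp : 0 < p)
    (J : ℂ → ℂ) (hJ : IsInner J)
    (hJH : ∀ h : ℂ → ℂ, MemHp p h →
      (fun z => J z * h z) ∈ hpClosure p (algGen2 (blaschke a) g))
    (w₀ : ℂ) (hw₀ : w₀ ∈ uDisk) (hΓ0 : Γg w₀ = 0) :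
    J w₀ = 0 := by
  have hBd := differentiableOn_blaschke ha
  have hB : MemHinf (blaschke a) :=
    ⟨hBd, 1, fun z hz => (norm_blaschke_lt_one ha ha0 hz).le⟩
  have hJb : MemHinf J := ⟨hJ.1, 1, hJ.2.1⟩
  have hcl : ∀ h, MemHinf h → _ := fun h hh =>
    closure_constraints hp hB hg (memHinf_mul hJb hh) (hJH h (memHp_of_bounded hp hh))
  by_contra hJ0
  -- Test function `h(z) = z - w`.
  have hsep : ∀ w ∈ uDisk, w ≠ w₀ → blaschke a w = blaschke a w₀ → g w ≠ g w₀ := by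
    intro w hw hne hBw hgw
    have h := (hcl _ (memHinf_sub memHinf_id (memHinf_const w))).1 w hw w₀ hw₀ hBw hgw
    simp only [sub_self, mul_zero] at h
    exact mul_ne_zero hJ0 (sub_ne_zero.2 hne.symm) h.symm
  -- Test functions `1` and `z`.
  have hcrit : deriv (blaschke a) w₀ ≠ 0 ∨ deriv g w₀ ≠ 0 := by
    by_contra! hcon
    have hdiff : ∀ f : ℂ → ℂ, DifferentiableOn ℂ f uDisk → HasDerivAt f (deriv f w₀) w₀ :=
      fun f hf => (hf.differentiableAt (isOpen_ball.mem_nhds hw₀)).hasDerivAt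
    have hB0 := hcon.1 ▸ hdiff _ hBd
    have hg0 := hcon.2 ▸ hdiff _ hg.1
    have h1 := (hcl _ (memHinf_const 1)).2 w₀ hw₀ hB0 hg0
    have h2 := (hcl _ memHinf_id).2 w₀ hw₀ hB0 hg0
    rw [((hdiff J hJ.1).fun_mul (hasDerivAt_const w₀ (1:ℂ))).deriv] at h1
    rw [((hdiff J hJ.1).fun_mul (hasDerivAt_id' w₀)).deriv] at h2
    apply hJ0
    linear_combination h2 - w₀ * h1
  obtain ⟨c, hc, hlow⟩ := exists_fiber_lower_bound ha ha0 hg.1 hw₀ hsep hcrit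
  set d := min c 1 with hd
  have hd0 : 0 < d := lt_min hc one_pos
  have hev : ∀ᶠ z in 𝓝[≠] w₀, d ^ n ≤ ‖Γg z‖ := by
    have hdisk : ∀ᶠ z in 𝓝[≠] w₀, z ∈ uDisk :=
      mem_nhdsWithin_of_mem_nhds (isOpen_ball.mem_nhds hw₀)
    filter_upwards [hdisk, mem_nhdsWithin_of_mem_nhds hlow,
      eventually_calD_id_ne_zero ha ha0 hw₀] with z hz hlz hne
    have hBz := norm_blaschke_lt_one ha ha0 hz
    have hprod : d ^ Multiset.card ((fiberMS a z).erase z) * ‖calD a id z‖ ≤ ‖calD a g z‖ := by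
      refine pow_mul_prod_le_prod hd0.le fun w hw => ?_
      have hf : InFiber a z w := inFiber_of_mem_fiberMS (Multiset.mem_of_mem_erase hw)
      have hwd := hf.mem_uDisk ha hBz
      exact (mul_le_mul_of_nonneg_right (min_le_left c 1) (norm_nonneg _)).trans
        (hlz w (ball_subset_closedBall hwd) hf)
    rw [← hΓg.2 z hz, norm_mul] at hprod
    have hcard : Multiset.card ((fiberMS a z).erase z) ≤ n :=
      (Multiset.card_le_card (Multiset.erase_le _ _)).trans (card_fiberMS_le z)
    exact (pow_le_pow_of_le_one hd0.le (min_le_right c 1) hcard).trans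
      (le_of_mul_le_mul_right hprod (norm_pos_iff.2 hne))
  have hlim : Tendsto (fun z => ‖Γg z‖) (𝓝[≠] w₀) (𝓝 ‖Γg w₀‖) :=
    (hΓg.1.continuousOn.continuousAt (isOpen_ball.mem_nhds hw₀)).norm.tendsto.mono_left
      nhdsWithin_le_nhds
  have := ge_of_tendsto hlim hev
  rw [hΓ0, norm_zero] at this
  exact (pow_pos hd0 n).not_ge this
end
end

section
/- Let g belong to the disk algebra A(𝔻̄). Then the algebra ℂ[B,g] is dense in A(𝔻̄) (with respect to the sup norm on the closed disk) if and only if Γ(g) has no zeros in the closed unit disk. -/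
/-!
The disk algebra `A` is a free module of rank `n` over the algebra of functions `d(B)`, `d ∈ A`,
with basis `1, z, …, z^(n-1)` (`exists_rep`, `coeff_bound`). Indeed, with `P = ∏ (a_j - X)` and
`Q = ∏ (1 - conj(a_j) X)`, the relation `P(z) - B(z) Q(z) = 0` has degree exactly `n` in `z`, as one
of the `a_j` is `0`, and so reduces every monomial to a combination `∑ d_k(B) z^k` with `k < n`.
The `d_k` are bounded by a multiple of the sup norm of the sum: by the maximum principle this has to
be checked for `|β| = 1` only, where the fibers of `B` are uniformly separated because `B'` has no
zeros on the circle, so that the Vandermonde matrix of a fiber has a bounded inverse. Hence the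
representation extends from polynomials to their uniform closure `A`.

Let `N(β)` be the matrix of multiplication by `g` in this basis and `M(β)` the matrix with rows
`e_0 N(β)^k`, `k < n`, which are the coordinates of `g^k` (`krylov`). For a noncritical value `β`,
`det M(β)` is the quotient of the Vandermonde determinants of `g(w_j)` and `w_j`, where `w_j` runs
through the fiber, so `|det M(β)|² = ∏ |Γ(g)(w_j)|` (`norm_det_krylov_sq`). There are only finitely
many critical values, so by continuity `Γ(g)` has no zeros in the closed disk iff `det M` has none
(`det_eq_zero_of_gamma`, `det_ne_zero_of_gamma`).

If `det M` has no zeros, Cramer's rule gives `z = ∑ e_k(B) g^k` with `e_k ∈ A`, so `z`, and with it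
every polynomial, is in the closure of `ℂ[B,g]` (`dense_of_det`). If `det M(β) = 0`, choose `v ≠ 0`
with `M(β) v = 0`. By Cayley-Hamilton `e_0 N(β)^k v = 0` for all `k`, so the functional
`∑ d_k(B) z^k ↦ ∑ d_k(β) v_k`, which is bounded and nonzero, vanishes on `ℂ[B,g]`
(`det_ne_zero_of_dense`).
-/

open Complex Polynomial MeasureTheory Metric Set Filter Topology
open scoped Classical

noncomputable section

/-- The disk algebra `A(𝔻̄)`: continuous on the closed disk, holomorphic on the open disk. -/
def MemDiskAlg (f : ℂ → ℂ) : Prop :=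
  ContinuousOn f cDisk ∧ DifferentiableOn ℂ f uDisk

/-- The closure of `S` in the disk algebra, with respect to the sup norm on `𝔻̄`. -/
def daClosure (S : Set (ℂ → ℂ)) : Set (ℂ → ℂ) :=
  {f | MemDiskAlg f ∧ ∀ ε : ℝ, 0 < ε → ∃ h ∈ S, ∀ z ∈ cDisk, ‖f z - h z‖ ≤ ε}

/-- `S` has finite codimension in the disk algebra `A(𝔻̄)`. -/
def FiniteCodimDA (S : Set (ℂ → ℂ)) : Prop :=
  ∃ (k : ℕ) (e : Fin k → (ℂ → ℂ)), (∀ i, MemDiskAlg (e i)) ∧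
    ∀ f, MemDiskAlg f → ∃ (c : Fin k → ℂ) (s : ℂ → ℂ), s ∈ S ∧
      ∀ z ∈ cDisk, f z = s z + ∑ i, c i * e i z


/-! ### Numerator, denominator and fibers of the Blaschke product -/

/-- The numerator `∏ (a_j - X)` of the Blaschke product. -/
def numP {n : ℕ} (a : Fin n → ℂ) : ℂ[X] := ∏ j, (C (a j) - X)

/-- The denominator `∏ (1 - conj(a_j) X)` of the Blaschke product. -/
def denQ {n : ℕ} (a : Fin n → ℂ) : ℂ[X] := ∏ j, (1 - C ((starRingEnd ℂ) (a j)) * X)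

/-- The fiber polynomial `P - β Q`, whose roots are the solutions of `B(w) = β`. -/
def fibPoly {n : ℕ} (a : Fin n → ℂ) (β : ℂ) : ℂ[X] := numP a - C β * denQ a

/-- The numerator `P'Q - PQ'` of the derivative of the Blaschke product `P / Q`. -/
def wronsk {n : ℕ} (a : Fin n → ℂ) : ℂ[X] :=
  derivative (numP a) * denQ a - numP a * derivative (denQ a)

lemma mem_cDisk {z : ℂ} : z ∈ cDisk ↔ ‖z‖ ≤ 1 := by simp [cDisk]

lemma mem_uDisk {z : ℂ} : z ∈ uDisk ↔ ‖z‖ < 1 := by simp [uDisk]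

lemma uDisk_subset : uDisk ⊆ cDisk := ball_subset_closedBall

lemma isCompact_cDisk : IsCompact cDisk := isCompact_closedBall 0 1

lemma isOpen_uDisk : IsOpen uDisk := isOpen_ball

lemma closure_uDisk : closure uDisk = cDisk := closure_ball 0 one_ne_zero

lemma eval_numP {n : ℕ} (a : Fin n → ℂ) (z : ℂ) : (numP a).eval z = ∏ j, (a j - z) := by
  simp [numP, eval_prod]

lemma eval_denQ {n : ℕ} (a : Fin n → ℂ) (z : ℂ) :
    (denQ a).eval z = ∏ j, (1 - (starRingEnd ℂ) (a j) * z) := by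
  simp [denQ, eval_prod]

lemma blaschke_eq {n : ℕ} (a : Fin n → ℂ) (z : ℂ) :
    blaschke a z = (numP a).eval z / (denQ a).eval z := by
  simp [blaschke, eval_numP, eval_denQ, Finset.prod_div_distrib]

/-- The identity behind all comparisons of `|a - w|` with `|1 - conj(a) w|`. -/
lemma factor_identity (a w : ℂ) :
    ‖1 - (starRingEnd ℂ) a * w‖ ^ 2 - ‖a - w‖ ^ 2 = (1 - ‖a‖ ^ 2) * (1 - ‖w‖ ^ 2) := by
  simp only [← Complex.normSq_eq_norm_sq, Complex.normSq_apply]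
  simp
  ring

lemma factor_lt {a w : ℂ} (ha : ‖a‖ < 1) (hw : ‖w‖ < 1) :
    ‖a - w‖ < ‖1 - (starRingEnd ℂ) a * w‖ := by
  have h := factor_identity a w
  refine lt_of_pow_lt_pow_left₀ 2 (norm_nonneg _) ?_
  have h1 : 0 < 1 - ‖a‖ ^ 2 := by nlinarith [norm_nonneg a]
  have h2 : 0 < 1 - ‖w‖ ^ 2 := by nlinarith [norm_nonneg w]
  nlinarith [mul_pos h1 h2]

lemma factor_gt {a w : ℂ} (ha : ‖a‖ < 1) (hw : 1 < ‖w‖) :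
    ‖1 - (starRingEnd ℂ) a * w‖ < ‖a - w‖ := by
  have h := factor_identity a w
  refine lt_of_pow_lt_pow_left₀ 2 (norm_nonneg _) ?_
  have h1 : 0 < 1 - ‖a‖ ^ 2 := by nlinarith [norm_nonneg a]
  have h2 : 0 < ‖w‖ ^ 2 - 1 := by nlinarith [norm_nonneg w]
  nlinarith [mul_pos h1 h2]

lemma factor_eq {a w : ℂ} (hw : ‖w‖ = 1) :
    ‖a - w‖ = ‖1 - (starRingEnd ℂ) a * w‖ := by
  have h := factor_identity a w
  rw [hw] at h
  refine (pow_left_inj₀ (norm_nonneg _) (norm_nonneg _) two_ne_zero).1 ?_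
  linarith

lemma factor_pos {a w : ℂ} (ha : ‖a‖ < 1) (hw : ‖w‖ ≤ 1) :
    0 < ‖1 - (starRingEnd ℂ) a * w‖ := by
  rw [norm_pos_iff]
  intro h
  have h1 : ‖(starRingEnd ℂ) a * w‖ = 1 := by rw [← sub_eq_zero.1 h, norm_one]
  rw [norm_mul, RCLike.norm_conj] at h1
  nlinarith [norm_nonneg a, norm_nonneg w]

section Fib

variable {n : ℕ} {a : Fin n → ℂ}

lemma denQ_ne_zero (ha : ∀ j, a j ∈ uDisk) {w : ℂ} (hw : w ∈ cDisk) : (denQ a).eval w ≠ 0 := by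
  rw [eval_denQ, Finset.prod_ne_zero_iff]
  intro j _
  exact norm_pos_iff.1 (factor_pos (mem_uDisk.1 (ha j)) (mem_cDisk.1 hw))

lemma norm_numP_lt (hn : 0 < n) (ha : ∀ j, a j ∈ uDisk) {w : ℂ} (hw : ‖w‖ < 1) :
    ‖(numP a).eval w‖ < ‖(denQ a).eval w‖ := by
  have : Nonempty (Fin n) := ⟨⟨0, hn⟩⟩
  by_cases h0 : (numP a).eval w = 0
  · rw [h0, norm_zero, norm_pos_iff]
    exact denQ_ne_zero ha (mem_cDisk.2 hw.le)
  rw [eval_numP, ← ne_eq, Finset.prod_ne_zero_iff] at h0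
  rw [eval_numP, eval_denQ, norm_prod, norm_prod]
  exact Finset.prod_lt_prod_of_nonempty (fun j hj => norm_pos_iff.2 (h0 j hj))
    (fun j _ => factor_lt (mem_uDisk.1 (ha j)) hw) Finset.univ_nonempty

lemma norm_numP_eq {w : ℂ} (hw : ‖w‖ = 1) :
    ‖(numP a).eval w‖ = ‖(denQ a).eval w‖ := by
  rw [eval_numP, eval_denQ, norm_prod, norm_prod]
  exact Finset.prod_congr rfl fun j _ => factor_eq hw

lemma norm_numP_gt (hn : 0 < n) (ha : ∀ j, a j ∈ uDisk) {w : ℂ} (hw : 1 < ‖w‖) :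
    ‖(denQ a).eval w‖ < ‖(numP a).eval w‖ := by
  have : Nonempty (Fin n) := ⟨⟨0, hn⟩⟩
  by_cases h0 : (denQ a).eval w = 0
  · rw [h0, norm_zero, norm_pos_iff, eval_numP, Finset.prod_ne_zero_iff]
    intro j _ h
    rw [← sub_eq_zero.1 h] at hw
    exact absurd (mem_uDisk.1 (ha j)) (not_lt.2 hw.le)
  rw [eval_denQ, ← ne_eq, Finset.prod_ne_zero_iff] at h0
  rw [eval_numP, eval_denQ, norm_prod, norm_prod]
  exact Finset.prod_lt_prod_of_nonempty (fun j hj => norm_pos_iff.2 (h0 j hj))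
    (fun j _ => factor_gt (mem_uDisk.1 (ha j)) hw) Finset.univ_nonempty

lemma blaschke_mem_uDisk (hn : 0 < n) (ha : ∀ j, a j ∈ uDisk) {w : ℂ} (hw : w ∈ uDisk) :
    blaschke a w ∈ uDisk := by
  rw [mem_uDisk, blaschke_eq, norm_div,
    div_lt_one (norm_pos_iff.2 (denQ_ne_zero ha (uDisk_subset hw)))]
  exact norm_numP_lt hn ha (mem_uDisk.1 hw)

lemma blaschke_mem_cDisk (hn : 0 < n) (ha : ∀ j, a j ∈ uDisk) {w : ℂ} (hw : w ∈ cDisk) :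
    blaschke a w ∈ cDisk := by
  rw [mem_cDisk, blaschke_eq, norm_div,
    div_le_one (norm_pos_iff.2 (denQ_ne_zero ha hw))]
  rcases (mem_cDisk.1 hw).lt_or_eq with h | h
  · exact (norm_numP_lt hn ha h).le
  · exact (norm_numP_eq h).le

lemma eval_fibPoly (β w : ℂ) :
    (fibPoly a β).eval w = (numP a).eval w - β * (denQ a).eval w := by
  simp [fibPoly]

lemma eval_fibPoly_blaschke (ha : ∀ j, a j ∈ uDisk) {w : ℂ} (hw : w ∈ cDisk) :
    (fibPoly a (blaschke a w)).eval w = 0 := by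
  rw [eval_fibPoly, blaschke_eq, div_mul_cancel₀ _ (denQ_ne_zero ha hw), sub_self]

lemma root_mem_cDisk (hn : 0 < n) (ha : ∀ j, a j ∈ uDisk) {β w : ℂ} (hβ : ‖β‖ ≤ 1)
    (h : (fibPoly a β).eval w = 0) : w ∈ cDisk := by
  rw [mem_cDisk]
  by_contra! hw
  have h1 := norm_numP_gt hn ha hw
  rw [eval_fibPoly, sub_eq_zero] at h
  rw [h, norm_mul] at h1
  nlinarith [norm_nonneg ((denQ a).eval w)]

lemma blaschke_root (hn : 0 < n) (ha : ∀ j, a j ∈ uDisk) {β w : ℂ} (hβ : ‖β‖ ≤ 1)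
    (h : (fibPoly a β).eval w = 0) : blaschke a w = β := by
  rw [blaschke_eq, div_eq_iff (denQ_ne_zero ha (root_mem_cDisk hn ha hβ h))]
  rwa [eval_fibPoly, sub_eq_zero] at h

lemma root_mem_uDisk (hn : 0 < n) (ha : ∀ j, a j ∈ uDisk) {β w : ℂ} (hβ : ‖β‖ < 1)
    (h : (fibPoly a β).eval w = 0) : w ∈ uDisk := by
  have hc := root_mem_cDisk hn ha hβ.le h
  rw [mem_uDisk]
  refine lt_of_le_of_ne (mem_cDisk.1 hc) fun hw => ?_
  have h1 := norm_numP_eq (a := a) hw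
  rw [eval_fibPoly, sub_eq_zero] at h
  rw [h, norm_mul] at h1
  have := norm_pos_iff.2 (denQ_ne_zero ha hc)
  nlinarith

lemma root_norm_eq_one (hn : 0 < n) (ha : ∀ j, a j ∈ uDisk) {β w : ℂ} (hβ : ‖β‖ = 1)
    (h : (fibPoly a β).eval w = 0) : ‖w‖ = 1 := by
  refine le_antisymm (mem_cDisk.1 (root_mem_cDisk hn ha hβ.le h)) ?_
  by_contra! hw
  have h1 := norm_numP_lt hn ha hw
  rw [eval_fibPoly, sub_eq_zero] at h
  rw [h, norm_mul, hβ, one_mul] at h1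
  exact lt_irrefl _ h1

lemma natDegree_C_sub_X (b : ℂ) : (C b - X : ℂ[X]).natDegree = 1 := by
  rw [← neg_sub, natDegree_neg, natDegree_X_sub_C]

lemma degree_numP : (numP a).natDegree = n := by
  unfold numP
  rw [natDegree_prod]
  · simp [natDegree_C_sub_X]
  · intro j _ h
    have := congrArg natDegree h
    simp [natDegree_C_sub_X] at this

lemma leadingCoeff_numP : (numP a).leadingCoeff = (-1) ^ n := by
  unfold numP
  rw [leadingCoeff_prod]
  have : ∀ j, (C (a j) - X : ℂ[X]).leadingCoeff = -1 := by
    intro j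
    rw [← neg_sub, leadingCoeff_neg, leadingCoeff_X_sub_C]
  simp [this]

/-- Since some `a_j` vanishes, the denominator has smaller degree than the numerator, so every
fiber polynomial has degree exactly `n`. -/
lemma degree_denQ_lt (hn : 0 < n) (ha0 : a ⟨0, hn⟩ = 0) : (denQ a).natDegree < n := by
  unfold denQ
  refine (natDegree_prod_le _ _).trans_lt ?_
  have h1 : ∀ j, (1 - C ((starRingEnd ℂ) (a j)) * X : ℂ[X]).natDegree ≤ 1 := by
    intro j
    compute_degree
  calc _ < ∑ j : Fin n, 1 := by
        refine Finset.sum_lt_sum (fun j _ => h1 j) ⟨⟨0, hn⟩, Finset.mem_univ _, ?_⟩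
        simp [ha0]
    _ = n := by simp

lemma degree_aux (hn : 0 < n) (ha0 : a ⟨0, hn⟩ = 0) (β : ℂ) :
    (C β * denQ a).degree < (numP a).degree := by
  have h1 := degree_denQ_lt hn ha0
  have h2 : (C β * denQ a).natDegree < (numP a).natDegree := by
    rw [degree_numP]
    exact (natDegree_C_mul_le _ _).trans_lt h1
  exact degree_lt_degree h2

lemma natDegree_fibPoly (hn : 0 < n) (ha0 : a ⟨0, hn⟩ = 0) (β : ℂ) :
    (fibPoly a β).natDegree = n := by
  unfold fibPoly
  rw [natDegree_eq_of_degree_eq (degree_sub_eq_left_of_degree_lt (degree_aux hn ha0 β)),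
    degree_numP]

lemma leadingCoeff_fibPoly (hn : 0 < n) (ha0 : a ⟨0, hn⟩ = 0) (β : ℂ) :
    (fibPoly a β).leadingCoeff = (-1) ^ n := by
  unfold fibPoly
  rw [leadingCoeff_sub_of_degree_lt (degree_aux hn ha0 β), leadingCoeff_numP]

lemma fibPoly_ne_zero (hn : 0 < n) (ha0 : a ⟨0, hn⟩ = 0) (β : ℂ) : fibPoly a β ≠ 0 := by
  intro h
  have := natDegree_fibPoly hn ha0 β
  rw [h, natDegree_zero] at this
  omega

/-- An enumeration of the fiber over `β`, with multiplicity. -/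
lemma exists_enum (hn : 0 < n) (ha0 : a ⟨0, hn⟩ = 0) (β : ℂ) :
    ∃ w : Fin n → ℂ, (fibPoly a β).roots = Finset.univ.val.map w ∧
      fibPoly a β = C ((-1) ^ n) * Lagrange.nodal Finset.univ w := by
  have hs := IsAlgClosed.splits (fibPoly a β)
  have hcard : Multiset.card (fibPoly a β).roots = n := by
    rw [← hs.natDegree_eq_card_roots, natDegree_fibPoly hn ha0]
  obtain ⟨w, hw⟩ : ∃ w : Fin n → ℂ, (fibPoly a β).roots = Finset.univ.val.map w := by
    obtain ⟨l, hl⟩ := Quot.exists_rep (fibPoly a β).roots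
    have hl' : (l : Multiset ℂ) = (fibPoly a β).roots := hl
    rw [← hl', Multiset.coe_card] at hcard
    subst hcard
    refine ⟨l.get, ?_⟩
    rw [← hl', Fin.univ_val_map, List.ofFn_get]
  refine ⟨w, hw, ?_⟩
  conv_lhs => rw [hs.eq_prod_roots, leadingCoeff_fibPoly hn ha0, hw]
  rw [Multiset.map_map]
  rfl

lemma enum_root {β : ℂ} {w : Fin n → ℂ} (hw : (fibPoly a β).roots = Finset.univ.val.map w)
    (j : Fin n) : (fibPoly a β).eval (w j) = 0 := by
  have : w j ∈ (fibPoly a β).roots := by rw [hw]; simp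
  exact (mem_roots'.1 this).2

lemma eval_wronsk_root {β w : ℂ} (h : (fibPoly a β).eval w = 0) :
    (wronsk a).eval w = (derivative (fibPoly a β)).eval w * (denQ a).eval w := by
  rw [eval_fibPoly, sub_eq_zero] at h
  simp only [wronsk, fibPoly, eval_sub, eval_mul, h, derivative_sub, derivative_mul,
    derivative_C, eval_C, zero_mul, zero_add]
  ring

/-- The Blaschke product has no critical points on the unit circle: there
`w B'(w) / B(w) = ∑ (1 - |a_j|²) / |a_j - w|² > 0`. -/
lemma wronsk_ne_zero (hn : 0 < n) (ha : ∀ j, a j ∈ uDisk) {w : ℂ} (hw : ‖w‖ = 1) :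
    (wronsk a).eval w ≠ 0 := by
  have hc : w ∈ cDisk := mem_cDisk.2 hw.le
  have hQ := denQ_ne_zero ha hc
  have hP : (numP a).eval w ≠ 0 := by
    rw [← norm_pos_iff, norm_numP_eq hw, norm_pos_iff]; exact hQ
  have hPj : ∀ j, a j - w ≠ 0 := by
    have := hP
    rw [eval_numP, Finset.prod_ne_zero_iff] at this
    exact fun j => this j (Finset.mem_univ _)
  have hQj : ∀ j, 1 - (starRingEnd ℂ) (a j) * w ≠ 0 := by
    have := hQ
    rw [eval_denQ, Finset.prod_ne_zero_iff] at this
    exact fun j => this j (Finset.mem_univ _)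
  have h1 : (derivative (numP a)).eval w / (numP a).eval w = ∑ j, (-1) / (a j - w) := by
    have := logDeriv_prod (s := Finset.univ) (f := fun j (z : ℂ) => a j - z) (x := w)
      (fun j _ => hPj j) (fun j _ => by fun_prop)
    have e : (fun z => ∏ j, (a j - z)) = fun z => (numP a).eval z := by
      ext z; rw [eval_numP]
    rw [e, logDeriv_apply, Polynomial.deriv] at this
    rw [this]
    refine Finset.sum_congr rfl fun j _ => ?_
    simp [logDeriv_apply]
  have h2 : (derivative (denQ a)).eval w / (denQ a).eval w
      = ∑ j, (-(starRingEnd ℂ) (a j)) / (1 - (starRingEnd ℂ) (a j) * w) := by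
    have := logDeriv_prod (s := Finset.univ)
      (f := fun j (z : ℂ) => 1 - (starRingEnd ℂ) (a j) * z) (x := w)
      (fun j _ => hQj j) (fun j _ => by fun_prop)
    have e : (fun z => ∏ j, (1 - (starRingEnd ℂ) (a j) * z)) = fun z => (denQ a).eval z := by
      ext z; rw [eval_denQ]
    rw [e, logDeriv_apply, Polynomial.deriv] at this
    rw [this]
    refine Finset.sum_congr rfl fun j _ => ?_
    rw [logDeriv_apply]
    congr 1
    rw [deriv_const_sub, deriv_const_mul _ differentiableAt_fun_id]
    simp
  have hww : w * (starRingEnd ℂ) w = 1 := by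
    rw [Complex.mul_conj, Complex.normSq_eq_norm_sq, hw]; simp
  have h3 : w * ((wronsk a).eval w / ((numP a).eval w * (denQ a).eval w))
      = ((∑ j, (1 - ‖a j‖ ^ 2) / ‖a j - w‖ ^ 2 : ℝ) : ℂ) := by
    have : (wronsk a).eval w / ((numP a).eval w * (denQ a).eval w)
        = (derivative (numP a)).eval w / (numP a).eval w
          - (derivative (denQ a)).eval w / (denQ a).eval w := by
      simp only [wronsk, eval_sub, eval_mul]
      field_simp
    rw [this, h1, h2, ← Finset.sum_sub_distrib, Finset.mul_sum]
    push_cast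
    refine Finset.sum_congr rfl fun j _ => ?_
    rw [← Complex.mul_conj', ← Complex.mul_conj']
    have hd : (starRingEnd ℂ) (a j - w) ≠ 0 := (_root_.map_ne_zero _).2 (hPj j)
    have e : 1 - (starRingEnd ℂ) (a j) * w = - w * (starRingEnd ℂ) (a j - w) := by
      rw [map_sub]; linear_combination (-1 : ℂ) * hww
    have hw0 : w ≠ 0 := by rintro rfl; simp at hw
    have h4 := hPj j
    rw [e]
    rw [map_sub] at hd ⊢
    field_simp
    linear_combination hww
  intro h0
  rw [h0, zero_div, mul_zero] at h3
  have h5 : (0:ℝ) < ∑ j, (1 - ‖a j‖ ^ 2) / ‖a j - w‖ ^ 2 := by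
    refine Finset.sum_pos (fun j _ => ?_) ⟨⟨0, hn⟩, Finset.mem_univ _⟩
    have := mem_uDisk.1 (ha j)
    have h6 := norm_pos_iff.2 (hPj j)
    have h7 : 0 < 1 - ‖a j‖ ^ 2 := by nlinarith [norm_nonneg (a j)]
    positivity
  exact h5.ne (by exact_mod_cast h3)

end Fib

/-! ### The disk algebra -/

lemma MemDiskAlg.const (c : ℂ) : MemDiskAlg fun _ => c :=
  ⟨continuousOn_const, differentiableOn_const c⟩

lemma MemDiskAlg.add {f g : ℂ → ℂ} (hf : MemDiskAlg f) (hg : MemDiskAlg g) :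
    MemDiskAlg fun z => f z + g z := ⟨hf.1.add hg.1, hf.2.add hg.2⟩

lemma MemDiskAlg.sub {f g : ℂ → ℂ} (hf : MemDiskAlg f) (hg : MemDiskAlg g) :
    MemDiskAlg fun z => f z - g z := ⟨hf.1.sub hg.1, hf.2.sub hg.2⟩

lemma MemDiskAlg.mul {f g : ℂ → ℂ} (hf : MemDiskAlg f) (hg : MemDiskAlg g) :
    MemDiskAlg fun z => f z * g z := ⟨hf.1.mul hg.1, hf.2.mul hg.2⟩

lemma MemDiskAlg.inv {f : ℂ → ℂ} (hf : MemDiskAlg f) (h0 : ∀ z ∈ cDisk, f z ≠ 0) :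
    MemDiskAlg fun z => (f z)⁻¹ := ⟨hf.1.inv₀ h0, hf.2.inv fun z hz => h0 z (uDisk_subset hz)⟩

lemma MemDiskAlg.sum {ι : Type*} (s : Finset ι) {f : ι → ℂ → ℂ} (hf : ∀ i ∈ s, MemDiskAlg (f i)) :
    MemDiskAlg fun z => ∑ i ∈ s, f i z :=
  ⟨continuousOn_finsetSum s fun i hi => (hf i hi).1,
    DifferentiableOn.fun_sum fun i hi => (hf i hi).2⟩

lemma MemDiskAlg.prod {ι : Type*} (s : Finset ι) {f : ι → ℂ → ℂ}
    (hf : ∀ i ∈ s, MemDiskAlg (f i)) : MemDiskAlg fun z => ∏ i ∈ s, f i z :=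
  ⟨continuousOn_finsetProd s fun i hi => (hf i hi).1,
    DifferentiableOn.fun_finsetProd fun i hi => (hf i hi).2⟩

lemma memDiskAlg_poly (p : ℂ[X]) : MemDiskAlg fun z => p.eval z :=
  ⟨p.continuous.continuousOn, p.differentiable.differentiableOn⟩

lemma memDiskAlg_pow (k : ℕ) : MemDiskAlg fun z => z ^ k :=
  ⟨(continuous_pow k).continuousOn, (differentiable_pow k).differentiableOn⟩

lemma MemDiskAlg.det {m : ℕ} {M : ℂ → Matrix (Fin m) (Fin m) ℂ}
    (hM : ∀ i j, MemDiskAlg fun z => M z i j) : MemDiskAlg fun z => (M z).det := by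
  simp only [Matrix.det_apply']
  exact MemDiskAlg.sum _ fun σ _ => (MemDiskAlg.const _).mul (MemDiskAlg.prod _ fun i _ => hM _ _)

lemma MemDiskAlg.adjugate {m : ℕ} {M : ℂ → Matrix (Fin m) (Fin m) ℂ}
    (hM : ∀ i j, MemDiskAlg fun z => M z i j) (i j : Fin m) :
    MemDiskAlg fun z => (M z).adjugate i j := by
  simp only [Matrix.adjugate_apply]
  refine MemDiskAlg.det fun k l => ?_
  by_cases h : k = j
  · simp only [h, Matrix.updateRow_self]
    exact MemDiskAlg.const _
  · simp only [Matrix.updateRow_ne h]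
    exact hM k l

lemma MemDiskAlg.matrix_mul {m : ℕ} {M N : ℂ → Matrix (Fin m) (Fin m) ℂ}
    (hM : ∀ i j, MemDiskAlg fun z => M z i j) (hN : ∀ i j, MemDiskAlg fun z => N z i j)
    (i j : Fin m) : MemDiskAlg fun z => (M z * N z) i j := by
  simp only [Matrix.mul_apply]
  exact MemDiskAlg.sum _ fun k _ => (hM i k).mul (hN k j)

lemma MemDiskAlg.matrix_pow {m : ℕ} {M : ℂ → Matrix (Fin m) (Fin m) ℂ}
    (hM : ∀ i j, MemDiskAlg fun z => M z i j) (k : ℕ) :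
    ∀ i j, MemDiskAlg fun z => (M z ^ k) i j := by
  induction k with
  | zero => intro i j; simp only [pow_zero]; exact MemDiskAlg.const _
  | succ k ih => simp only [pow_succ]; exact MemDiskAlg.matrix_mul ih hM

lemma MemDiskAlg.bounded {f : ℂ → ℂ} (hf : MemDiskAlg f) :
    ∃ K : ℝ, 0 < K ∧ ∀ z ∈ cDisk, ‖f z‖ ≤ K := by
  obtain ⟨K, hK⟩ := isCompact_cDisk.exists_bound_of_continuousOn hf.1
  exact ⟨max K 1, by positivity, fun z hz => (hK z hz).trans (le_max_left _ _)⟩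

lemma memDiskAlg_blaschke {n : ℕ} {a : Fin n → ℂ} (ha : ∀ j, a j ∈ uDisk) :
    MemDiskAlg (blaschke a) := by
  have : blaschke a = fun z => (numP a).eval z / (denQ a).eval z := funext (blaschke_eq a)
  rw [this]
  simp only [div_eq_mul_inv]
  exact (memDiskAlg_poly _).mul ((memDiskAlg_poly _).inv fun z hz => denQ_ne_zero ha hz)

/-- Maximum modulus principle for the disk algebra. -/
lemma MemDiskAlg.norm_le {f : ℂ → ℂ} (hf : MemDiskAlg f) {K : ℝ}
    (h : ∀ z : ℂ, ‖z‖ = 1 → ‖f z‖ ≤ K) {z : ℂ} (hz : z ∈ cDisk) : ‖f z‖ ≤ K := by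
  refine Complex.norm_le_of_forall_mem_frontier_norm_le (U := uDisk) isBounded_ball
    ⟨hf.2, by rw [closure_uDisk]; exact hf.1⟩ (fun w hw => h w ?_) (by rwa [closure_uDisk])
  rw [uDisk, frontier_ball _ one_ne_zero] at hw
  simpa using hw

/-- Uniform limits of disk algebra functions are in the disk algebra. -/
lemma MemDiskAlg.of_tendsto {F : ℕ → ℂ → ℂ} {f : ℂ → ℂ} (hF : ∀ m, MemDiskAlg (F m))
    (h : TendstoUniformlyOn F f atTop cDisk) : MemDiskAlg f :=
  ⟨h.continuousOn (Frequently.of_forall fun m => (hF m).1),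
    (h.mono uDisk_subset).tendstoLocallyUniformlyOn.differentiableOn
      (Eventually.of_forall fun m => (hF m).2) isOpen_uDisk⟩

/-- Polynomials are uniformly dense in the disk algebra: `f` is the uniform limit of its dilations
`f(r ·)`, whose Taylor series converge uniformly on the closed disk. -/
lemma MemDiskAlg.exists_poly {f : ℂ → ℂ} (hf : MemDiskAlg f) {ε : ℝ} (hε : 0 < ε) :
    ∃ p : ℂ[X], ∀ z ∈ cDisk, ‖f z - p.eval z‖ ≤ ε := by
  have huc := isCompact_cDisk.uniformContinuousOn_of_continuous hf.1
  obtain ⟨δ, hδ, hδ'⟩ := Metric.uniformContinuousOn_iff.1 huc (ε / 2) (by positivity)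
  -- a dilation factor `r < 1` within `δ` of `1`
  set r : ℝ := 1 / (1 + δ / 2) with hr
  have hr0 : 0 < r := by positivity
  have hr1 : r < 1 := by rw [hr, div_lt_one (by positivity)]; linarith
  have hrδ : 1 - r < δ := by
    have : 1 - r = (δ / 2) * r := by rw [hr]; field_simp; ring
    rw [this]; nlinarith
  have hmaps : ∀ z ∈ cDisk, (r : ℂ) * z ∈ cDisk := by
    intro z hz
    rw [mem_cDisk] at hz ⊢
    rw [norm_mul, Complex.norm_real, Real.norm_of_nonneg hr0.le]
    nlinarith [norm_nonneg z]
  have h1 : ∀ z ∈ cDisk, ‖f z - f (r * z)‖ < ε / 2 := by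
    intro z hz
    rw [← dist_eq_norm]
    refine hδ' z hz _ (hmaps z hz) ?_
    rw [dist_eq_norm]
    have : z - r * z = ((1 - r : ℝ) : ℂ) * z := by push_cast; ring
    rw [this, norm_mul, Complex.norm_real, Real.norm_of_nonneg (by linarith)]
    have := mem_cDisk.1 hz
    nlinarith [norm_nonneg z]
  -- a radius `s` with `1 < s` and `r * s < 1`
  obtain ⟨s, hs⟩ : ∃ s : NNReal, (s : ℝ) = 1 + δ / 4 :=
    ⟨Real.toNNReal _, Real.coe_toNNReal _ (by positivity)⟩
  have hs1 : 1 < (s : ℝ) := by rw [hs]; linarith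
  have hrs : r * s < 1 := by
    rw [hr, hs, one_div, inv_mul_lt_one₀ (by positivity)]; linarith
  have hdiff : DifferentiableOn ℂ (fun z => f (r * z))
      (closedBall 0 s) := by
    refine hf.2.comp (by fun_prop) ?_
    intro z hz
    rw [mem_uDisk, norm_mul, Complex.norm_real, Real.norm_of_nonneg hr0.le]
    have : ‖z‖ ≤ s := by simpa using hz
    nlinarith
  have hps := hdiff.hasFPowerSeriesOnBall (by rw [← NNReal.coe_pos]; linarith)
  obtain ⟨t, ht⟩ : ∃ t : NNReal, (t : ℝ) = 1 + δ / 8 :=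
    ⟨Real.toNNReal _, Real.coe_toNNReal _ (by positivity)⟩
  have ht1 : 1 < (t : ℝ) := by rw [ht]; linarith
  have hu := hps.tendstoUniformlyOn (r' := t) (by
    rw [ENNReal.coe_lt_coe, ← NNReal.coe_lt_coe, hs, ht]; linarith)
  rw [Metric.tendstoUniformlyOn_iff] at hu
  obtain ⟨N, hN⟩ := (hu (ε / 2) (by positivity)).exists
  refine ⟨∑ k ∈ Finset.range N, C ((cauchyPowerSeries (fun z => f (r * z)) 0 s k) 1) * X ^ k, ?_⟩
  intro z hz
  have h2 := hN z (by
    rw [Metric.mem_ball, dist_zero_right]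
    exact (mem_cDisk.1 hz).trans_lt ht1)
  rw [dist_eq_norm, zero_add] at h2
  have h3 : (∑ k ∈ Finset.range N,
      C ((cauchyPowerSeries (fun z => f (r * z)) 0 s k) 1) * X ^ k).eval z
      = (cauchyPowerSeries (fun z => f (r * z)) 0 s).partialSum N z := by
    rw [FormalMultilinearSeries.partialSum, eval_finsetSum]
    refine Finset.sum_congr rfl fun k _ => ?_
    rw [eval_mul, eval_C, eval_pow, eval_X, FormalMultilinearSeries.apply_eq_pow_smul_coeff,
      smul_eq_mul, mul_comm]
    rfl
  rw [h3]
  calc _ = ‖(f z - f (r * z)) + (f (r * z) -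
        (cauchyPowerSeries (fun z => f (r * z)) 0 s).partialSum N z)‖ := by congr 1; ring
    _ ≤ _ := norm_add_le _ _
    _ ≤ ε / 2 + ε / 2 := add_le_add (h1 z hz).le h2.le
    _ = ε := by ring

/-! ### Uniform approximation on the closed disk -/

/-- `f` is a uniform limit on the closed disk of functions from `S`. -/
def Appr (S : Set (ℂ → ℂ)) (f : ℂ → ℂ) : Prop :=
  ∀ ε : ℝ, 0 < ε → ∃ h ∈ S, ∀ z ∈ cDisk, ‖f z - h z‖ ≤ ε

lemma Appr.of_mem {S : Set (ℂ → ℂ)} {f : ℂ → ℂ} (h : f ∈ S) : Appr S f :=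
  fun ε hε => ⟨f, h, fun z _ => by simpa using hε.le⟩

lemma Appr.of_appr {S : Set (ℂ → ℂ)} {f : ℂ → ℂ}
    (h : ∀ ε : ℝ, 0 < ε → ∃ k, Appr S k ∧ ∀ z ∈ cDisk, ‖f z - k z‖ ≤ ε) : Appr S f := by
  intro ε hε
  obtain ⟨k, hk, hk'⟩ := h (ε / 2) (by positivity)
  obtain ⟨l, hl, hl'⟩ := hk (ε / 2) (by positivity)
  refine ⟨l, hl, fun z hz => ?_⟩
  calc _ ≤ ‖f z - k z‖ + ‖k z - l z‖ := norm_sub_le_norm_sub_add_norm_sub _ _ _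
    _ ≤ ε / 2 + ε / 2 := add_le_add (hk' z hz) (hl' z hz)
    _ = ε := by ring

lemma Appr.congr {S : Set (ℂ → ℂ)} {f g : ℂ → ℂ} (h : Appr S f) (hfg : ∀ z ∈ cDisk, g z = f z) :
    Appr S g := by
  intro ε hε
  obtain ⟨k, hk, hk'⟩ := h ε hε
  exact ⟨k, hk, fun z hz => by rw [hfg z hz]; exact hk' z hz⟩

section AlgGen

variable {F G : ℂ → ℂ}

lemma algGen2_add {f g : ℂ → ℂ} (hf : f ∈ algGen2 F G) (hg : g ∈ algGen2 F G) :
    (fun z => f z + g z) ∈ algGen2 F G := by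
  obtain ⟨P, hP⟩ := hf
  obtain ⟨Q, hQ⟩ := hg
  exact ⟨P + Q, fun z => by simp only [map_add, hP, hQ]⟩

lemma algGen2_mul {f g : ℂ → ℂ} (hf : f ∈ algGen2 F G) (hg : g ∈ algGen2 F G) :
    (fun z => f z * g z) ∈ algGen2 F G := by
  obtain ⟨P, hP⟩ := hf
  obtain ⟨Q, hQ⟩ := hg
  exact ⟨P * Q, fun z => by simp only [map_mul, hP, hQ]⟩

lemma algGen2_const (c : ℂ) : (fun _ => c) ∈ algGen2 F G := ⟨MvPolynomial.C c, fun z => by simp⟩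

lemma algGen2_left : F ∈ algGen2 F G := ⟨MvPolynomial.X 0, fun z => by simp⟩

lemma algGen2_right : G ∈ algGen2 F G := ⟨MvPolynomial.X 1, fun z => by simp⟩

lemma Appr.add {f g : ℂ → ℂ} (hf : Appr (algGen2 F G) f) (hg : Appr (algGen2 F G) g) :
    Appr (algGen2 F G) fun z => f z + g z := by
  intro ε hε
  obtain ⟨k, hk, hk'⟩ := hf (ε / 2) (by positivity)
  obtain ⟨l, hl, hl'⟩ := hg (ε / 2) (by positivity)
  refine ⟨_, algGen2_add hk hl, fun z hz => ?_⟩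
  calc _ = ‖(f z - k z) + (g z - l z)‖ := by congr 1; ring
    _ ≤ _ := norm_add_le _ _
    _ ≤ ε / 2 + ε / 2 := add_le_add (hk' z hz) (hl' z hz)
    _ = ε := by ring

lemma Appr.mul {f g : ℂ → ℂ} (hf : Appr (algGen2 F G) f) (hg : Appr (algGen2 F G) g)
    {K : ℝ} (hfK : ∀ z ∈ cDisk, ‖f z‖ ≤ K) (hgK : ∀ z ∈ cDisk, ‖g z‖ ≤ K) :
    Appr (algGen2 F G) fun z => f z * g z := by
  intro ε hε
  have hK : 0 ≤ K := (norm_nonneg _).trans (hfK 0 (by simp [cDisk]))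
  set η : ℝ := min 1 (ε / (2 * K + 1)) with hη
  have hη0 : 0 < η := by positivity
  have hη1 : η ≤ 1 := min_le_left _ _
  have hη2 : η * (2 * K + 1) ≤ ε := by
    rw [← le_div_iff₀ (by positivity)]; exact min_le_right _ _
  obtain ⟨k, hk, hk'⟩ := hf η hη0
  obtain ⟨l, hl, hl'⟩ := hg η hη0
  refine ⟨_, algGen2_mul hk hl, fun z hz => ?_⟩
  have h1 : ‖l z‖ ≤ K + 1 := by
    have := norm_sub_norm_le (l z) (g z)
    have h2 := hl' z hz
    rw [norm_sub_rev] at h2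
    linarith [hgK z hz]
  calc _ = ‖f z * (g z - l z) + (f z - k z) * l z‖ := by congr 1; ring
    _ ≤ ‖f z‖ * ‖g z - l z‖ + ‖f z - k z‖ * ‖l z‖ := by
        rw [← norm_mul, ← norm_mul]; exact norm_add_le _ _
    _ ≤ K * η + η * (K + 1) := by
        gcongr
        · exact hfK z hz
        · exact hl' z hz
        · exact hk' z hz
    _ ≤ ε := by linarith

lemma Appr.mul' {f g : ℂ → ℂ} (hf : Appr (algGen2 F G) f) (hg : Appr (algGen2 F G) g)
    (hf' : ContinuousOn f cDisk) (hg' : ContinuousOn g cDisk) :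
    Appr (algGen2 F G) fun z => f z * g z := by
  obtain ⟨K, hK⟩ := isCompact_cDisk.exists_bound_of_continuousOn hf'
  obtain ⟨L, hL⟩ := isCompact_cDisk.exists_bound_of_continuousOn hg'
  exact hf.mul hg (K := max K L) (fun z hz => (hK z hz).trans (le_max_left _ _))
    fun z hz => (hL z hz).trans (le_max_right _ _)

lemma Appr.sum {ι : Type*} (s : Finset ι) {f : ι → ℂ → ℂ}
    (hf : ∀ i ∈ s, Appr (algGen2 F G) (f i)) : Appr (algGen2 F G) fun z => ∑ i ∈ s, f i z := by
  induction s using Finset.cons_induction with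
  | empty => simpa using Appr.of_mem (algGen2_const 0)
  | cons i s hi ih =>
    simp only [Finset.sum_cons]
    exact (hf i (by simp)).add (ih fun j hj => hf j (by simp [hj]))

lemma Appr.pow {f : ℂ → ℂ} (hf : Appr (algGen2 F G) f) (hfc : ContinuousOn f cDisk) (k : ℕ) :
    Appr (algGen2 F G) fun z => f z ^ k := by
  induction k with
  | zero => simpa using Appr.of_mem (algGen2_const 1)
  | succ k ih => simp only [pow_succ]; exact ih.mul' hf (hfc.pow k) hfc

/-- The uniform closure of `ℂ[F,G]` is stable under composition with the disk algebra. -/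
lemma Appr.comp {f d : ℂ → ℂ} (hf : Appr (algGen2 F G) f) (hf' : ContinuousOn f cDisk)
    (hmaps : ∀ z ∈ cDisk, f z ∈ cDisk) (hd : MemDiskAlg d) :
    Appr (algGen2 F G) fun z => d (f z) := by
  refine Appr.of_appr fun ε hε => ?_
  obtain ⟨p, hp⟩ := hd.exists_poly hε
  refine ⟨fun z => p.eval (f z), ?_, fun z hz => hp _ (hmaps z hz)⟩
  simp only [eval_eq_sum_range]
  exact Appr.sum _ fun k _ => (Appr.of_mem (algGen2_const _)).mul' (hf.pow hf' k)
    continuousOn_const (hf'.pow k)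

end AlgGen

/-! ### The disk algebra as a free module of rank `n` over its image under `B` -/

lemma norm_det_vandermonde_sq {n : ℕ} (v : Fin n → ℂ) :
    ‖(Matrix.vandermonde v).det‖ ^ 2 = ∏ i, ∏ j ∈ Finset.univ.erase i, ‖v i - v j‖ := by
  have h := Finset.prod_prod_Ioi_mul_eq_prod_prod_off_diag (fun j i : Fin n => ‖v i - v j‖)
  have e : ∀ i : Fin n, ({i}ᶜ : Finset (Fin n)) = Finset.univ.erase i := by
    intro i; ext j; simp
  simp only [e] at h
  rw [← h, Matrix.det_vandermonde]
  simp only [norm_prod, ← Finset.prod_pow]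
  refine Finset.prod_congr rfl fun i _ => Finset.prod_congr rfl fun j _ => ?_
  rw [norm_sub_rev (v i) (v j), sq]

/-- A quantitative inverse of the Vandermonde matrix: a polynomial of degree less than `n` is
controlled by its values at `n` points of the closed disk. -/
lemma vandermonde_bound {n : ℕ} (w c : Fin n → ℂ) (hw : ∀ j, ‖w j‖ ≤ 1) {ε : ℝ}
    (h : ∀ j, ‖∑ k, c k * w j ^ (k : ℕ)‖ ≤ ε) (k : Fin n) :
    ‖(Matrix.vandermonde w).det‖ * ‖c k‖ ≤ n * n.factorial * ε := by
  set W := Matrix.vandermonde w with hW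
  have h1 : W.det • c = W.adjugate.mulVec (W.mulVec c) := by
    rw [Matrix.mulVec_mulVec, Matrix.adjugate_mul, Matrix.smul_mulVec, Matrix.one_mulVec]
  have h2 : ∀ j, (W.mulVec c) j = ∑ k, c k * w j ^ (k : ℕ) := by
    intro j
    simp only [Matrix.mulVec, dotProduct, hW, Matrix.vandermonde_apply]
    exact Finset.sum_congr rfl fun k _ => mul_comm _ _
  have h3 : ∀ i j, ‖W.adjugate i j‖ ≤ n.factorial := by
    intro i j
    rw [Matrix.adjugate_apply]
    have hent : ∀ p q, ‖W.updateRow j (Pi.single i 1) p q‖ ≤ 1 := by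
      intro p q
      by_cases hp : p = j
      · rw [hp, Matrix.updateRow_self]
        by_cases hq : q = i
        · subst hq; simp
        · rw [Pi.single_eq_of_ne hq]; simp
      · rw [Matrix.updateRow_ne hp, hW, Matrix.vandermonde_apply, norm_pow]
        exact pow_le_one₀ (norm_nonneg _) (hw p)
    have : ‖(W.updateRow j (Pi.single i 1)).det‖
        ≤ (Fintype.card (Fin n)).factorial • (1 : ℝ) ^ Fintype.card (Fin n) :=
      Matrix.det_le (abv := NormedField.toAbsoluteValue ℂ) hent
    simpa using this
  have h4 := congrFun h1 k
  rw [Pi.smul_apply, smul_eq_mul] at h4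
  rw [← norm_mul, h4]
  simp only [Matrix.mulVec, dotProduct] at h2 ⊢
  refine (norm_sum_le _ _).trans ?_
  calc _ ≤ ∑ _j : Fin n, (n.factorial : ℝ) * ε := by
        refine Finset.sum_le_sum fun j _ => ?_
        rw [norm_mul, h2]
        have := h j
        gcongr
        exact h3 k j
    _ = _ := by simp; ring

section Module

variable {n : ℕ} {a : Fin n → ℂ}

/-- On the unit circle the fibers of `B` are uniformly separated: the squared Vandermonde determinant
of a fiber is the product of the moduli of the derivative of the fiber polynomial at its roots,
and `B` has no critical points there. -/
lemma exists_separation (hn : 0 < n) (ha : ∀ j, a j ∈ uDisk) :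
    ∃ c : ℝ, 0 < c ∧ ∀ β : ℂ, ‖β‖ = 1 → ∀ w : Fin n → ℂ,
      (fibPoly a β).roots = Finset.univ.val.map w →
      fibPoly a β = C ((-1) ^ n) * Lagrange.nodal Finset.univ w →
      c ≤ ‖(Matrix.vandermonde w).det‖ := by
  have hcont : ContinuousOn (fun w => ‖(wronsk a).eval w / (denQ a).eval w‖) (sphere 0 1) := by
    refine ContinuousOn.norm (ContinuousOn.div (wronsk a).continuous.continuousOn
      (denQ a).continuous.continuousOn fun w hw => denQ_ne_zero ha ?_)
    exact sphere_subset_closedBall hw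
  obtain ⟨w₀, hw₀, hmin⟩ := (isCompact_sphere (0 : ℂ) 1).exists_isMinOn
    (NormedSpace.sphere_nonempty.2 zero_le_one) hcont
  set c₀ := ‖(wronsk a).eval w₀ / (denQ a).eval w₀‖ with hc₀
  have hc₀pos : 0 < c₀ := by
    have h1 : ‖w₀‖ = 1 := by simpa using hw₀
    exact norm_pos_iff.2 (div_ne_zero (wronsk_ne_zero hn ha h1)
      (denQ_ne_zero ha (mem_cDisk.2 h1.le)))
  refine ⟨Real.sqrt (c₀ ^ n), by positivity, fun β hβ w hw hfac => ?_⟩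
  rw [Real.sqrt_le_left (norm_nonneg _), norm_det_vandermonde_sq]
  have key : ∀ i, c₀ ≤ ∏ j ∈ Finset.univ.erase i, ‖w i - w j‖ := by
    intro i
    have hr := enum_root hw i
    have h1 : ‖w i‖ = 1 := root_norm_eq_one hn ha hβ hr
    have h2 := eval_wronsk_root hr
    rw [hfac, derivative_C_mul, eval_mul, eval_C,
      Lagrange.eval_nodal_derivative_eval_node_eq (Finset.mem_univ i), Lagrange.eval_nodal] at h2
    have h3 : c₀ ≤ ‖(wronsk a).eval (w i) / (denQ a).eval (w i)‖ := hmin (by simpa using h1)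
    rw [h2, mul_div_cancel_right₀ _ (denQ_ne_zero ha (mem_cDisk.2 h1.le)), norm_mul, norm_pow,
      norm_neg, norm_one, one_pow, one_mul, norm_prod] at h3
    exact h3
  calc c₀ ^ n = ∏ _i : Fin n, c₀ := by simp
    _ ≤ _ := Finset.prod_le_prod (fun _ _ => hc₀pos.le) fun i _ => key i

/-- The coefficients `d_k` of `∑ d_k(B) z^k` are controlled by the sup norm of the sum. -/
lemma coeff_bound (hn : 0 < n) (ha : ∀ j, a j ∈ uDisk) (ha0 : a ⟨0, hn⟩ = 0) :
    ∃ K : ℝ, 0 < K ∧ ∀ d : Fin n → ℂ → ℂ, (∀ k, MemDiskAlg (d k)) → ∀ ε : ℝ,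
      (∀ z ∈ cDisk, ‖∑ k, d k (blaschke a z) * z ^ (k : ℕ)‖ ≤ ε) →
      ∀ k, ∀ β ∈ cDisk, ‖d k β‖ ≤ K * ε := by
  obtain ⟨c, hc, hsep⟩ := exists_separation hn ha
  refine ⟨n * n.factorial / c, by positivity, fun d hd ε h k β hβ => ?_⟩
  refine (hd k).norm_le (fun β hβ => ?_) hβ
  obtain ⟨w, hw, hfac⟩ := exists_enum hn ha0 β
  have h1 : ∀ j, w j ∈ cDisk := fun j => root_mem_cDisk hn ha hβ.le (enum_root hw j)
  have h2 := vandermonde_bound w (fun k => d k β) (fun j => mem_cDisk.1 (h1 j)) (ε := ε)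
    (fun j => by
      have := h (w j) (h1 j)
      rwa [blaschke_root hn ha hβ.le (enum_root hw j)] at this) k
  have h3 := hsep β hβ w hw hfac
  rw [div_mul_eq_mul_div, le_div_iff₀ hc]
  nlinarith [norm_nonneg (d k β)]

/-- `f = ∑ d_k(B) z^k` on the closed disk, with all `d_k` in the disk algebra. -/
def BRep (a : Fin n → ℂ) (f : ℂ → ℂ) (d : Fin n → ℂ → ℂ) : Prop :=
  (∀ k, MemDiskAlg (d k)) ∧ ∀ z ∈ cDisk, f z = ∑ k, d k (blaschke a z) * z ^ (k : ℕ)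

lemma BRep.sum {ι : Type*} (s : Finset ι) {f : ι → ℂ → ℂ} {d : ι → Fin n → ℂ → ℂ}
    {e : ι → ℂ → ℂ} (he : ∀ i ∈ s, MemDiskAlg (e i)) (h : ∀ i ∈ s, BRep a (f i) (d i)) :
    BRep a (fun z => ∑ i ∈ s, e i (blaschke a z) * f i z) fun k z => ∑ i ∈ s, e i z * d i k z := by
  refine ⟨fun k => MemDiskAlg.sum _ fun i hi => (he i hi).mul ((h i hi).1 k), fun z hz => ?_⟩
  simp only [Finset.sum_mul]
  rw [Finset.sum_comm]
  refine Finset.sum_congr rfl fun i hi => ?_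
  rw [(h i hi).2 z hz, Finset.mul_sum]
  exact Finset.sum_congr rfl fun k _ => by ring

lemma BRep.sub {f g : ℂ → ℂ} {d e : Fin n → ℂ → ℂ} (hf : BRep a f d) (hg : BRep a g e) :
    BRep a (fun z => f z - g z) fun k z => d k z - e k z := by
  refine ⟨fun k => (hf.1 k).sub (hg.1 k), fun z hz => ?_⟩
  simp only [sub_mul, Finset.sum_sub_distrib]
  rw [hf.2 z hz, hg.2 z hz]

lemma BRep.congr {f g : ℂ → ℂ} {d : Fin n → ℂ → ℂ} (hf : BRep a f d)
    (h : ∀ z ∈ cDisk, g z = f z) : BRep a g d :=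
  ⟨hf.1, fun z hz => by rw [h z hz, hf.2 z hz]⟩

lemma rep_pow_lt (l : Fin n) : BRep a (fun z => z ^ (l : ℕ)) fun k _ => if l = k then 1 else 0 :=
  ⟨fun k => MemDiskAlg.const _, fun z _ => by simp⟩

/-- Monomials are reduced with the relation `P(z) - B(z) Q(z) = 0`, which expresses `z^n` through
lower powers with coefficients affine in `B`. -/
lemma rep_pow (hn : 0 < n) (ha : ∀ j, a j ∈ uDisk) (ha0 : a ⟨0, hn⟩ = 0) (m : ℕ) :
    ∃ d, BRep a (fun z => z ^ m) d := by
  induction m using Nat.strong_induction_on with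
  | _ m ih =>
  by_cases hm : m < n
  · exact ⟨_, rep_pow_lt ⟨m, hm⟩⟩
  push Not at hm
  have hlt : ∀ k : Fin n, m - n + k < m := fun k => by have := k.2; omega
  choose d hd using fun k : Fin n => ih (m - n + k) (hlt k)
  refine ⟨_, (BRep.sum Finset.univ
    (e := fun (k : Fin n) β => -(-1) ^ n * ((numP a).coeff k - β * (denQ a).coeff k))
    (fun k _ => ?_) (fun k _ => hd k)).congr fun z hz => ?_⟩
  · refine (MemDiskAlg.const _).mul ((MemDiskAlg.const _).sub (MemDiskAlg.mul ?_ (MemDiskAlg.const _)))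
    simpa using memDiskAlg_pow 1
  · have h1 := eval_fibPoly_blaschke ha hz
    rw [eval_eq_sum_range, natDegree_fibPoly hn ha0, Finset.sum_range_succ, Finset.sum_range] at h1
    have h2 : (fibPoly a (blaschke a z)).coeff n = (-1) ^ n := by
      have := leadingCoeff_fibPoly hn ha0 (blaschke a z)
      rwa [leadingCoeff, natDegree_fibPoly hn ha0] at this
    have h3 : ∀ k, (fibPoly a (blaschke a z)).coeff k
        = (numP a).coeff k - blaschke a z * (denQ a).coeff k := by
      intro k; simp [fibPoly]
    have hsq : ((-1 : ℂ) ^ n) * (-1) ^ n = 1 := by rw [← mul_pow]; simp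
    rw [h2] at h1
    simp only [h3] at h1
    have h4 : z ^ m = z ^ (m - n) * z ^ n := by rw [← pow_add]; congr 1; omega
    have h5 : z ^ n = -(-1) ^ n *
        ∑ k : Fin n, ((numP a).coeff k - blaschke a z * (denQ a).coeff k) * z ^ (k : ℕ) := by
      linear_combination (-1) ^ n * h1 - z ^ n * hsq
    change z ^ m = _
    rw [h4, h5, Finset.mul_sum, Finset.mul_sum]
    refine Finset.sum_congr rfl fun k _ => ?_
    rw [pow_add]; ring

lemma rep_poly (hn : 0 < n) (ha : ∀ j, a j ∈ uDisk) (ha0 : a ⟨0, hn⟩ = 0) (p : ℂ[X]) :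
    ∃ d, BRep a (fun z => p.eval z) d := by
  choose d hd using rep_pow hn ha ha0
  refine ⟨_, (BRep.sum (Finset.range (p.natDegree + 1)) (e := fun k _ => p.coeff k)
    (fun k _ => MemDiskAlg.const _) (fun k _ => hd k)).congr fun z _ => ?_⟩
  exact eval_eq_sum_range z

/-- Every disk algebra function has the form `∑ d_k(B) z^k`. By `coeff_bound` the coefficients of
approximating polynomials are uniformly Cauchy. -/
lemma exists_rep (hn : 0 < n) (ha : ∀ j, a j ∈ uDisk) (ha0 : a ⟨0, hn⟩ = 0) {f : ℂ → ℂ}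
    (hf : MemDiskAlg f) : ∃ d, BRep a f d := by
  obtain ⟨K, hK, hbound⟩ := coeff_bound hn ha ha0
  choose p hp using fun m : ℕ => hf.exists_poly (ε := 1 / ((m : ℝ) + 1)) (by positivity)
  choose d hd using fun m => rep_poly hn ha ha0 (p m)
  have hdist : ∀ m l k, ∀ β ∈ cDisk,
      ‖d m k β - d l k β‖ ≤ K * (1 / ((m : ℝ) + 1) + 1 / ((l : ℝ) + 1)) := by
    intro m l k β hβ
    refine hbound _ ((hd m).sub (hd l)).1 _ (fun z hz => ?_) k β hβ
    rw [← ((hd m).sub (hd l)).2 z hz]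
    calc _ = ‖(f z - (p l).eval z) - (f z - (p m).eval z)‖ := by congr 1; ring
      _ ≤ ‖f z - (p l).eval z‖ + ‖f z - (p m).eval z‖ := norm_sub_le _ _
      _ ≤ _ := by linarith [hp m z hz, hp l z hz]
  have hlim : Tendsto (fun m : ℕ => 1 / ((m : ℝ) + 1)) atTop (𝓝 0) :=
    tendsto_one_div_add_atTop_nhds_zero_nat
  have hcau : ∀ k, UniformCauchySeqOn (fun m => d m k) atTop cDisk := by
    intro k
    rw [Metric.uniformCauchySeqOn_iff]
    intro ε hε
    obtain ⟨N, hN⟩ := eventually_atTop.1 (hlim.eventually (gt_mem_nhds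
      (show 0 < ε / (2 * K) by positivity)))
    refine ⟨N, fun m hm l hl β hβ => ?_⟩
    rw [dist_eq_norm]
    refine (hdist m l k β hβ).trans_lt ?_
    have h1 := hN m hm
    have h2 := hN l hl
    calc _ < K * (ε / (2 * K) + ε / (2 * K)) := by gcongr
      _ = ε := by field_simp; ring
  have hex : ∀ k, ∃ D : ℂ → ℂ, TendstoUniformlyOn (fun m => d m k) D atTop cDisk := by
    intro k
    have : ∀ β, ∃ L, β ∈ cDisk → Tendsto (fun m => d m k β) atTop (𝓝 L) := by
      intro β
      by_cases hβ : β ∈ cDisk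
      · obtain ⟨L, hL⟩ := cauchySeq_tendsto_of_complete ((hcau k).cauchySeq hβ)
        exact ⟨L, fun _ => hL⟩
      · exact ⟨0, fun h => absurd h hβ⟩
    choose D hD using this
    exact ⟨D, (hcau k).tendstoUniformlyOn_of_tendsto hD⟩
  choose D hD using hex
  refine ⟨D, fun k => MemDiskAlg.of_tendsto (fun m => (hd m).1 k) (hD k), fun z hz => ?_⟩
  have h1 : Tendsto (fun m => (p m).eval z) atTop (𝓝 (f z)) := by
    rw [tendsto_iff_norm_sub_tendsto_zero]
    refine squeeze_zero (fun _ => norm_nonneg _) (fun m => ?_) hlim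
    rw [norm_sub_rev]
    exact hp m z hz
  have h2 : Tendsto (fun m => (p m).eval z) atTop
      (𝓝 (∑ k, D k (blaschke a z) * z ^ (k : ℕ))) := by
    have : (fun m => (p m).eval z) = fun m => ∑ k, d m k (blaschke a z) * z ^ (k : ℕ) :=
      funext fun m => (hd m).2 z hz
    rw [this]
    exact tendsto_finsetSum _ fun k _ =>
      ((hD k).tendsto_at (blaschke_mem_cDisk hn ha hz)).mul_const _
  exact tendsto_nhds_unique h1 h2

end Module

/-! ### Multiplication by `g` and the Krylov determinant -/

/-- The matrix whose `k`-th row is `e_0 N^k`. If `N` is the matrix of multiplication by `g` in the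
basis `1, z, …, z^(n-1)`, its rows are the coordinates of `1, g, …, g^(n-1)`. -/
def krylov {n : ℕ} (hn : 0 < n) (N : Matrix (Fin n) (Fin n) ℂ) : Matrix (Fin n) (Fin n) ℂ :=
  Matrix.of fun k l => (N ^ (k : ℕ)) ⟨0, hn⟩ l

/-- `N` is the matrix of multiplication by `g`, with entries in the disk algebra composed with
`B`. -/
def IsMulMatrix {n : ℕ} (a : Fin n → ℂ) (g : ℂ → ℂ) (N : ℂ → Matrix (Fin n) (Fin n) ℂ) : Prop :=
  (∀ i j, MemDiskAlg fun β => N β i j) ∧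
    ∀ z ∈ cDisk, ∀ j : Fin n, ∑ l, N (blaschke a z) j l * z ^ (l : ℕ) = g z * z ^ (j : ℕ)

section Krylov

variable {n : ℕ} {a : Fin n → ℂ} {g : ℂ → ℂ} {N : ℂ → Matrix (Fin n) (Fin n) ℂ}

lemma exists_mulMatrix (hn : 0 < n) (ha : ∀ j, a j ∈ uDisk) (ha0 : a ⟨0, hn⟩ = 0)
    (hg : MemDiskAlg g) : ∃ N, IsMulMatrix a g N := by
  choose d hd using fun j : Fin n => exists_rep hn ha ha0 (hg.mul (memDiskAlg_pow j))
  exact ⟨fun β => Matrix.of fun j l => d j l β, fun i j => (hd i).1 j,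
    fun z hz j => ((hd j).2 z hz).symm⟩

lemma mulMatrix_pow (hN : IsMulMatrix a g N) (k : ℕ) {z : ℂ} (hz : z ∈ cDisk) (j : Fin n) :
    ∑ l, (N (blaschke a z) ^ k) j l * z ^ (l : ℕ) = g z ^ k * z ^ (j : ℕ) := by
  induction k generalizing j with
  | zero => simp [Matrix.one_apply]
  | succ k ih =>
    simp only [pow_succ', Matrix.mul_apply, Finset.sum_mul]
    rw [Finset.sum_comm]
    simp only [mul_assoc, ← Finset.mul_sum, ih]
    rw [mul_left_comm, ← hN.2 z hz j, Finset.mul_sum]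
    exact Finset.sum_congr rfl fun l _ => by ring

lemma krylov_rel (hn : 0 < n) (hN : IsMulMatrix a g N) {z : ℂ} (hz : z ∈ cDisk) (k : Fin n) :
    ∑ l, krylov hn (N (blaschke a z)) k l * z ^ (l : ℕ) = g z ^ (k : ℕ) := by
  have := mulMatrix_pow hN k hz ⟨0, hn⟩
  simpa [krylov] using this

lemma memDiskAlg_krylov (hn : 0 < n) (hN : IsMulMatrix a g N) (k l : Fin n) :
    MemDiskAlg fun β => krylov hn (N β) k l :=
  MemDiskAlg.matrix_pow hN.1 k _ _

lemma calD_enum (hn : 0 < n) (ha : ∀ j, a j ∈ uDisk) {β : ℂ} (hβ : ‖β‖ ≤ 1) {w : Fin n → ℂ}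
    (hw : (fibPoly a β).roots = Finset.univ.val.map w) (hinj : Function.Injective w)
    (f : ℂ → ℂ) (j : Fin n) :
    calD a f (w j) = ∏ i ∈ Finset.univ.erase j, (f (w j) - f (w i)) := by
  have h1 : fiberMS a (w j) = Finset.univ.val.map w := by
    rw [← hw]
    conv_rhs => rw [← blaschke_root hn ha hβ (enum_root hw j)]
    rfl
  rw [calD, h1, ← Multiset.map_erase w hinj, Multiset.map_map]
  simp [Finset.prod]

/-- The determinant of the coordinates of `1, g, …, g^(n-1)` is, up to sign, the quotient of the
Vandermonde determinants of `g(w_j)` and `w_j`; its square is the product of `Γ(g)` over the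
fiber. -/
lemma norm_det_krylov_sq (hn : 0 < n) (ha : ∀ j, a j ∈ uDisk) (hN : IsMulMatrix a g N)
    {G : ℂ → ℂ} (hG : ∀ z ∈ uDisk, G z * calD a id z = calD a g z)
    {β : ℂ} (hβ : ‖β‖ < 1) {w : Fin n → ℂ}
    (hw : (fibPoly a β).roots = Finset.univ.val.map w) (hinj : Function.Injective w) :
    ‖(krylov hn (N β)).det‖ ^ 2 = ∏ j, ‖G (w j)‖ := by
  have hmem : ∀ j, w j ∈ uDisk := fun j => root_mem_uDisk hn ha hβ (enum_root hw j)
  have h1 : Matrix.vandermonde (fun j => g (w j))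
      = Matrix.vandermonde w * (krylov hn (N β)).transpose := by
    ext j k
    rw [Matrix.vandermonde_apply, Matrix.mul_apply, ← krylov_rel hn hN (uDisk_subset (hmem j)) k,
      blaschke_root hn ha hβ.le (enum_root hw j)]
    refine Finset.sum_congr rfl fun l _ => ?_
    rw [Matrix.vandermonde_apply, Matrix.transpose_apply, mul_comm]
  have h2 := congrArg (fun M => ‖M.det‖ ^ 2) h1
  simp only [Matrix.det_mul, Matrix.det_transpose, norm_mul, mul_pow] at h2
  have h3 : ‖(Matrix.vandermonde w).det‖ ^ 2 ≠ 0 :=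
    pow_ne_zero _ (norm_ne_zero_iff.2 (Matrix.det_vandermonde_ne_zero_iff.2 hinj))
  have h4 : ‖(Matrix.vandermonde fun j => g (w j)).det‖ ^ 2
      = (∏ j, ‖G (w j)‖) * ‖(Matrix.vandermonde w).det‖ ^ 2 := by
    rw [norm_det_vandermonde_sq, norm_det_vandermonde_sq, ← Finset.prod_mul_distrib]
    refine Finset.prod_congr rfl fun j _ => ?_
    have := congrArg norm (hG (w j) (hmem j))
    rw [calD_enum hn ha hβ.le hw hinj, calD_enum hn ha hβ.le hw hinj, norm_mul, norm_prod,
      norm_prod] at this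
    exact this.symm
  rw [h4, mul_comm] at h2
  exact (mul_left_cancel₀ h3 h2).symm

/-- Off the finite set of critical values of `B`, the points of a fiber are distinct. -/
lemma exists_critical (hn : 0 < n) (ha : ∀ j, a j ∈ uDisk) (ha0 : a ⟨0, hn⟩ = 0) :
    ∃ S : Set ℂ, S.Finite ∧ ∀ β, ‖β‖ ≤ 1 → β ∉ S → ∀ w : Fin n → ℂ,
      (fibPoly a β).roots = Finset.univ.val.map w → Function.Injective w := by
  have hW : wronsk a ≠ 0 := by
    intro h
    have := wronsk_ne_zero hn ha (w := 1) (by simp)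
    rw [h, eval_zero] at this
    exact this rfl
  refine ⟨blaschke a '' {w | w ∈ (wronsk a).roots.toFinset}, (Finset.finite_toSet _).image _,
    fun β hβ hS w hw => ?_⟩
  have hnd : (fibPoly a β).roots.Nodup := by
    rw [Multiset.nodup_iff_count_le_one]
    intro x
    by_contra! hx
    rw [count_roots, one_lt_rootMultiplicity_iff_isRoot (fibPoly_ne_zero hn ha0 β)] at hx
    obtain ⟨hx1, hx2⟩ := hx
    refine hS ⟨x, ?_, blaschke_root hn ha hβ hx1⟩
    simp only [Set.mem_ofPred_eq, Multiset.mem_toFinset]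
    rw [mem_roots hW, IsRoot.def, eval_wronsk_root hx1]
    rw [IsRoot.def.1 hx2, zero_mul]
  rw [hw] at hnd
  exact fun i j hij => Multiset.inj_on_of_nodup_map hnd i (by simp) j (by simp) hij

lemma cDisk_subset_closure {S : Set ℂ} (hS : S.Finite) : cDisk ⊆ closure (uDisk \ S) := by
  rw [← closure_uDisk]
  refine closure_minimal ?_ isClosed_closure
  have hd : Dense Sᶜ := Set.Countable.dense_compl ℝ (Set.Finite.countable hS)
  exact hd.open_subset_closure_inter isOpen_uDisk

/-- Where `Γ(g)` vanishes, the determinant of the powers of `g` vanishes. -/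
lemma det_eq_zero_of_gamma (hn : 0 < n) (ha : ∀ j, a j ∈ uDisk) (ha0 : a ⟨0, hn⟩ = 0)
    (hN : IsMulMatrix a g N) {G : ℂ → ℂ} (hGda : MemDiskAlg G)
    (hG : ∀ z ∈ uDisk, G z * calD a id z = calD a g z)
    {z₀ : ℂ} (hz₀ : z₀ ∈ cDisk) (h0 : G z₀ = 0) :
    (krylov hn (N (blaschke a z₀))).det = 0 := by
  obtain ⟨S, hSfin, hS⟩ := exists_critical hn ha ha0
  obtain ⟨K, hK, hKb⟩ := hGda.bounded
  have hTfin : (⋃ β ∈ S, {z | z ∈ (fibPoly a β).roots.toFinset}).Finite :=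
    hSfin.biUnion fun β _ => Finset.finite_toSet _
  set T := ⋃ β ∈ S, {z | z ∈ (fibPoly a β).roots.toFinset} with hT
  have hle : ∀ z ∈ uDisk \ T, ‖(krylov hn (N (blaschke a z))).det‖ ^ 2 ≤ ‖G z‖ * K ^ (n - 1) := by
    rintro z ⟨hz, hzT⟩
    have hβ := mem_uDisk.1 (blaschke_mem_uDisk hn ha hz)
    have hroot : z ∈ (fibPoly a (blaschke a z)).roots :=
      (mem_roots (fibPoly_ne_zero hn ha0 _)).2 (eval_fibPoly_blaschke ha (uDisk_subset hz))
    have hnS : blaschke a z ∉ S := by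
      intro h
      refine hzT ?_
      rw [hT]
      simp only [Set.mem_iUnion]
      exact ⟨_, h, by simpa using hroot⟩
    obtain ⟨w, hw, -⟩ := exists_enum hn ha0 (blaschke a z)
    have hinj := hS _ hβ.le hnS w hw
    rw [norm_det_krylov_sq hn ha hN hG hβ hw hinj]
    rw [hw] at hroot
    obtain ⟨j, -, hj⟩ := Multiset.mem_map.1 hroot
    rw [← Finset.mul_prod_erase _ _ (Finset.mem_univ j), hj]
    gcongr
    calc _ ≤ ∏ _i ∈ Finset.univ.erase j, K := Finset.prod_le_prod (fun _ _ => norm_nonneg _)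
          fun i _ => hKb _ (root_mem_cDisk hn ha hβ.le (enum_root hw i))
      _ = K ^ (n - 1) := by simp
  have hdet := MemDiskAlg.det (memDiskAlg_krylov hn hN)
  have hcl : closure (uDisk \ T) ⊆ cDisk := by
    rw [← closure_uDisk]; exact closure_mono sdiff_subset
  have hc1 : ContinuousOn (fun z => ‖(krylov hn (N (blaschke a z))).det‖ ^ 2)
      (closure (uDisk \ T)) :=
    ((hdet.1.comp ((memDiskAlg_blaschke ha).1.mono hcl)
      fun z hz => blaschke_mem_cDisk hn ha (hcl hz)).norm).pow 2
  have hc2 : ContinuousOn (fun z => ‖G z‖ * K ^ (n - 1)) (closure (uDisk \ T)) :=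
    (hGda.1.mono hcl).norm.mul continuousOn_const
  have := le_on_closure hle hc1 hc2 (cDisk_subset_closure hTfin hz₀)
  simp only [h0, norm_zero, zero_mul] at this
  exact norm_eq_zero.1 (pow_eq_zero_iff two_ne_zero |>.1 (le_antisymm this (by positivity)))

/-- If `Γ(g)` has no zeros, the determinant of the powers of `g` is bounded away from zero off the
critical values, hence everywhere. -/
lemma det_ne_zero_of_gamma (hn : 0 < n) (ha : ∀ j, a j ∈ uDisk) (ha0 : a ⟨0, hn⟩ = 0)
    (hN : IsMulMatrix a g N) {G : ℂ → ℂ} (hGda : MemDiskAlg G)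
    (hG : ∀ z ∈ uDisk, G z * calD a id z = calD a g z)
    (h0 : ∀ z ∈ cDisk, G z ≠ 0) {β : ℂ} (hβ : β ∈ cDisk) :
    (krylov hn (N β)).det ≠ 0 := by
  obtain ⟨S, hSfin, hS⟩ := exists_critical hn ha ha0
  obtain ⟨z₀, hz₀, hmin⟩ := isCompact_cDisk.exists_isMinOn ⟨0, by simp [cDisk]⟩ hGda.1.norm
  have hδ : 0 < ‖G z₀‖ := norm_pos_iff.2 (h0 z₀ hz₀)
  have hle : ∀ β ∈ uDisk \ S, ‖G z₀‖ ^ n ≤ ‖(krylov hn (N β)).det‖ ^ 2 := by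
    rintro β ⟨hβ, hβS⟩
    have hβ' := mem_uDisk.1 hβ
    obtain ⟨w, hw, -⟩ := exists_enum hn ha0 β
    rw [norm_det_krylov_sq hn ha hN hG hβ' hw (hS β hβ'.le hβS w hw)]
    calc ‖G z₀‖ ^ n = ∏ _j : Fin n, ‖G z₀‖ := by simp
      _ ≤ _ := Finset.prod_le_prod (fun _ _ => norm_nonneg _)
          fun j _ => hmin (root_mem_cDisk hn ha hβ'.le (enum_root hw j))
  have hdet := MemDiskAlg.det (memDiskAlg_krylov hn hN)
  have hcl : closure (uDisk \ S) ⊆ cDisk := by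
    rw [← closure_uDisk]; exact closure_mono sdiff_subset
  have := le_on_closure hle continuousOn_const ((hdet.1.mono hcl).norm.pow 2)
    (cDisk_subset_closure hSfin hβ)
  intro h
  simp only [h, norm_zero] at this
  have h1 : 0 < ‖G z₀‖ ^ n := by positivity
  norm_num at this
  linarith

/-! ### Density and the Krylov determinant -/

/-- If the determinant of the powers of `g` has no zeros, `z` is a combination of
`1, g, …, g^(n-1)` with coefficients in the disk algebra composed with `B`. -/
lemma dense_of_det (hn0 : 0 < n) (hn : 1 < n) (ha : ∀ j, a j ∈ uDisk)
    (hg : MemDiskAlg g) (hN : IsMulMatrix a g N)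
    (hdet : ∀ β ∈ cDisk, (krylov hn0 (N β)).det ≠ 0) {f : ℂ → ℂ} (hf : MemDiskAlg f) :
    Appr (algGen2 (blaschke a) g) f := by
  have hB := (memDiskAlg_blaschke ha).1
  have hmaps : ∀ z ∈ cDisk, blaschke a z ∈ cDisk := fun z hz => blaschke_mem_cDisk hn0 ha hz
  set e : Fin n → ℂ → ℂ := fun k β =>
    ((krylov hn0 (N β)).det)⁻¹ * (krylov hn0 (N β)).adjugate ⟨1, hn⟩ k with he
  have heda : ∀ k, MemDiskAlg (e k) := fun k =>
    ((MemDiskAlg.det (memDiskAlg_krylov hn0 hN)).inv hdet).mul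
      (MemDiskAlg.adjugate (memDiskAlg_krylov hn0 hN) _ _)
  have hz : ∀ z ∈ cDisk, z = ∑ k, e k (blaschke a z) * g z ^ (k : ℕ) := by
    intro z hz
    set M := krylov hn0 (N (blaschke a z)) with hM
    have h1 : M.mulVec (fun l : Fin n => z ^ (l : ℕ)) = fun k : Fin n => g z ^ (k : ℕ) :=
      funext fun k => krylov_rel hn0 hN hz k
    have h2 : M.adjugate.mulVec (fun k : Fin n => g z ^ (k : ℕ))
        = M.det • fun l : Fin n => z ^ (l : ℕ) := by
      rw [← h1, Matrix.mulVec_mulVec, Matrix.adjugate_mul, Matrix.smul_mulVec, Matrix.one_mulVec]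
    have h3 := congrFun h2 ⟨1, hn⟩
    simp only [Matrix.mulVec, dotProduct, Pi.smul_apply, smul_eq_mul, pow_one] at h3
    simp only [he, mul_assoc, ← Finset.mul_sum]
    rw [← hM, h3, inv_mul_cancel_left₀ (hdet _ (hmaps z hz))]
  have hid : Appr (algGen2 (blaschke a) g) fun z => z := by
    refine Appr.congr (Appr.sum Finset.univ (f := fun k z => e k (blaschke a z) * g z ^ (k : ℕ))
      fun k _ => ?_) hz
    exact ((Appr.of_mem algGen2_left).comp hB hmaps (heda k)).mul'
      ((Appr.of_mem algGen2_right).pow hg.1 k) ((heda k).1.comp hB hmaps) (hg.1.pow k)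
  exact hid.comp continuousOn_id (fun z hz => hz) hf

/-- If the determinant vanishes at `β`, a nonzero vector `v` annihilating the coordinates of all
powers of `g` at `β` yields a bounded functional on the disk algebra vanishing on `ℂ[B,g]`. -/
lemma det_ne_zero_of_dense (hn : 0 < n) (ha : ∀ j, a j ∈ uDisk) (ha0 : a ⟨0, hn⟩ = 0)
    (hN : IsMulMatrix a g N)
    (hdense : ∀ f, MemDiskAlg f → Appr (algGen2 (blaschke a) g) f) {β : ℂ} (hβ : β ∈ cDisk) :
    (krylov hn (N β)).det ≠ 0 := by
  intro hdet
  obtain ⟨v, hv0, hv⟩ := Matrix.exists_mulVec_eq_zero_iff.2 hdet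
  set N₀ := N β with hN₀
  -- the row `e_0 N₀^k` annihilates `v` for `k < n`, hence for all `k` by Cayley-Hamilton
  have hsmall : ∀ k : ℕ, k < n → ((N₀ ^ k).mulVec v) ⟨0, hn⟩ = 0 := fun k hk =>
    congrFun hv ⟨k, hk⟩
  have hall : ∀ k : ℕ, ((N₀ ^ k).mulVec v) ⟨0, hn⟩ = 0 := by
    intro k
    have hdeg : (X ^ k %ₘ N₀.charpoly).natDegree < n := by
      have h1 : N₀.charpoly.natDegree = n := by simp
      have := natDegree_modByMonic_lt (X ^ k) N₀.charpoly_monic (by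
        intro h; rw [h] at h1; simp at h1; omega)
      rwa [h1] at this
    rw [Matrix.pow_eq_aeval_mod_charpoly, aeval_eq_sum_range' hdeg, Matrix.sum_mulVec,
      Finset.sum_apply]
    refine Finset.sum_eq_zero fun i hi => ?_
    rw [Matrix.smul_mulVec, Pi.smul_apply, hsmall i (Finset.mem_range.1 hi), smul_zero]
  have hrep : ∀ h ∈ algGen2 (blaschke a) g, ∃ d, BRep a h d ∧
      ∀ k : ℕ, ∑ l, d l β * ((N₀ ^ k).mulVec v) l = 0 := by
    rintro h ⟨P, hP⟩
    obtain rfl : h = fun z => MvPolynomial.eval (fun i => ![blaschke a, g] i z) P := funext hP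
    clear hP
    induction P using MvPolynomial.induction_on with
    | C c =>
      refine ⟨_, (BRep.sum {(⟨0, hn⟩ : Fin n)} (e := fun _ _ => c)
        (fun _ _ => MemDiskAlg.const _) (fun l _ => rep_pow_lt l)).congr fun z _ => by simp, ?_⟩
      intro k
      simp [hall]
    | add p q hp hq =>
      obtain ⟨d, hd, hd'⟩ := hp
      obtain ⟨e, he, he'⟩ := hq
      refine ⟨fun k z => d k z + e k z, ⟨fun k => (hd.1 k).add (he.1 k), fun z hz => ?_⟩,
        fun k => ?_⟩
      · simp only [map_add, add_mul, Finset.sum_add_distrib]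
        rw [← hd.2 z hz, ← he.2 z hz]
      · simp only [add_mul, Finset.sum_add_distrib, hd', he', add_zero]
    | mul_X p i hp =>
      obtain ⟨d, hd, hd'⟩ := hp
      fin_cases i
      · refine ⟨fun k z => d k z * z, ⟨fun k => (hd.1 k).mul (by simpa using memDiskAlg_pow 1),
          fun z hz => ?_⟩, fun k => ?_⟩
        · have hdz : MvPolynomial.eval (fun i => ![blaschke a, g] i z) p
              = ∑ k, d k (blaschke a z) * z ^ (k : ℕ) := hd.2 z hz
          simp only [Fin.zero_eta, map_mul, MvPolynomial.eval_X, Matrix.cons_val_zero]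
          rw [hdz, Finset.sum_mul]
          exact Finset.sum_congr rfl fun l _ => by ring
        · have : ∀ l, d l β * β * ((N₀ ^ k).mulVec v) l
              = β * (d l β * ((N₀ ^ k).mulVec v) l) := fun l => by ring
          simp only [this, ← Finset.mul_sum, hd', mul_zero]
      · refine ⟨fun l z => ∑ j, d j z * N z j l, ⟨fun l => MemDiskAlg.sum _ fun j _ =>
          (hd.1 j).mul (hN.1 j l), fun z hz => ?_⟩, fun k => ?_⟩
        · have hdz : MvPolynomial.eval (fun i => ![blaschke a, g] i z) p
              = ∑ k, d k (blaschke a z) * z ^ (k : ℕ) := hd.2 z hz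
          simp only [Fin.mk_one, map_mul, MvPolynomial.eval_X, Matrix.cons_val_one,
            Matrix.cons_val_fin_one]
          rw [hdz]
          simp only [Finset.sum_mul]
          conv_rhs => rw [Finset.sum_comm]
          refine Finset.sum_congr rfl fun j _ => ?_
          simp only [mul_assoc, ← Finset.mul_sum, hN.2 z hz j]
          ring
        · have h1 := hd' (k + 1)
          rw [pow_succ', ← Matrix.mulVec_mulVec] at h1
          rw [← h1]
          simp only [Finset.sum_mul]
          rw [Finset.sum_comm]
          refine Finset.sum_congr rfl fun j _ => ?_
          conv_rhs => rw [Matrix.mulVec, dotProduct]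
          simp only [mul_assoc, ← Finset.mul_sum]
          rfl
  obtain ⟨K, hK, hbound⟩ := coeff_bound hn ha ha0
  apply hv0
  funext j
  rw [Pi.zero_apply, ← norm_le_zero_iff]
  refine le_of_forall_pos_le_add fun ε hε => ?_
  set V := ∑ l, ‖v l‖ with hV
  have hV0 : 0 ≤ V := Finset.sum_nonneg fun _ _ => norm_nonneg _
  obtain ⟨h, hh, happ⟩ := hdense _ (memDiskAlg_pow j) (ε / (K * (V + 1))) (by positivity)
  obtain ⟨d, hd, hd'⟩ := hrep h hh
  have hsub := (rep_pow_lt (a := a) j).sub hd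
  have h1 := hbound _ hsub.1 _ fun z hz => by
    rw [← hsub.2 z hz]; exact happ z hz
  have h2 : v j = ∑ l, ((if j = l then 1 else 0) - d l β) * v l := by
    have := hd' 0
    rw [pow_zero, Matrix.one_mulVec] at this
    simp only [sub_mul, Finset.sum_sub_distrib, this]
    simp
  rw [h2, zero_add]
  calc _ ≤ ∑ l, ‖((if j = l then 1 else 0) - d l β) * v l‖ := norm_sum_le _ _
    _ ≤ ∑ l, K * (ε / (K * (V + 1))) * ‖v l‖ := by
        refine Finset.sum_le_sum fun l _ => ?_
        rw [norm_mul]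
        gcongr
        exact h1 l β hβ
    _ = ε * (V / (V + 1)) := by rw [← Finset.mul_sum, ← hV]; field_simp
    _ ≤ ε * 1 := by
        gcongr
        rw [div_le_one (by positivity)]; linarith
    _ = ε := mul_one ε

end Krylov

/-- **Theorem E(2).** For `g` in the disk algebra, `ℂ[B,g]` is dense in
`A(𝔻̄)` iff `Γ(g)` has no zeros in the closed unit disk. -/
theorem stmt18 {n : ℕ} (hn : 2 ≤ n) (a : Fin n → ℂ) (ha : ∀ j, a j ∈ uDisk)
    (ha0 : a ⟨0, by omega⟩ = 0)
    (g Γg : ℂ → ℂ) (hg : MemDiskAlg g)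
    (hΓda : MemDiskAlg Γg) (hΓeq : ∀ z ∈ uDisk, Γg z * calD a id z = calD a g z) :
    (∀ f, MemDiskAlg f → f ∈ daClosure (algGen2 (blaschke a) g)) ↔
      ∀ z ∈ cDisk, Γg z ≠ 0 := by
  have hn0 : 0 < n := by omega
  obtain ⟨N, hN⟩ := exists_mulMatrix hn0 ha ha0 hg
  constructor
  · intro h z hz h0
    exact det_ne_zero_of_dense hn0 ha ha0 hN (fun f hf => (h f hf).2)
      (blaschke_mem_cDisk hn0 ha hz) (det_eq_zero_of_gamma hn0 ha ha0 hN hΓda hΓeq hz h0)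
  · intro h f hf
    exact ⟨hf, dense_of_det hn0 hn ha hg hN
      (fun β hβ => det_ne_zero_of_gamma hn0 ha ha0 hN hΓda hΓeq h hβ) hf⟩
end
end
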